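/- Let d, n ∈ ℕ, 1 ≤ r < s < t < ∞ and C > 0. There exists ε₀ > 0, depending only on d, n, r, s, t, C, with the following property. Let Q ⊂ ℝ^d be a cube, f, g ∈ L^s(4Q) and w ∈ L^r(4Q;ℝ^n). Suppose there exists ε ∈ (0,ε₀) such that for every dyadic subcube Q_k of Q with Q_k ≠ Q, with predecessor Q̃_k, there exists a measurable w_a : 4Q̃_k → ℝ^n with w_a ∈ L^t(2Q̃_k) ∩ L^r(4Q̃_k) satisfying: (1) (⨍_{2Q̃_k}|w_a|^t)^{1/t} ≤ (C/2)(⨍_{4Q̃_k}|w_a|^r)^{1/r}; (2) ⨍_{4Q̃_k}|w_a|^r ≤ C⨍_{4Q̃_k}|w|^r + C⨍_{4Q̃_k}|g|^r; (3) ⨍_{4Q̃_k}|w − w_a|^r ≤ ε⨍_{4Q̃_k}|w|^r + C⨍_{4Q̃_k}|f|^r. Then w ∈ L^s(Q;ℝ^n), and there is c > 0 depending only on d, n, r, s, t, C (independent of f, g, w, Q) such that (⨍_Q|w|^s)^{1/s} ≤ c[(⨍_{4Q}|f|^s)^{1/s} + (⨍_{4Q}|g|^s)^{1/s} + (⨍_{4Q}|w|^r)^{1/r}].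 -/

import Mathlib

open MeasureTheory Filter Metric Set
open scoped ENNReal Topology RealInnerProductSpace

noncomputable section

/-- `ℝ^d` with the Euclidean norm. -/
abbrev Ed (d : ℕ) : Type := EuclideanSpace ℝ (Fin d)
/-- `ℝ^N` with the Euclidean norm. -/
abbrev En (N : ℕ) : Type := EuclideanSpace ℝ (Fin N)
/-- The space of `N × d` matrices with the Euclidean (Frobenius) norm. -/
abbrev Mat (N d : ℕ) : Type := EuclideanSpace ℝ (Fin N × Fin d)

/-- The open axis-parallel cube with center `c` and sidelength `R`. -/
def cube {d : ℕ} (c : Ed d) (R : ℝ) : Set (Ed d) := {x | ∀ i, |x i - c i| < R / 2}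

/-- The `i`-th partial derivative of a scalar function. -/
def pder {d : ℕ} (φ : Ed d → ℝ) (i : Fin d) (x : Ed d) : ℝ :=
  fderiv ℝ φ x (EuclideanSpace.single i 1)

/-- `g` is the weak gradient of `f` on `U`: for every smooth compactly supported scalar test
function `φ` with support in `U` and all indices `a`, `i`,
`∫_U f^a ∂_i φ = −∫_U g^a_i φ`. -/
def IsWeakGrad {d : ℕ} {ι : Type} [Fintype ι] (U : Set (Ed d))
    (f : Ed d → EuclideanSpace ℝ ι) (g : Ed d → EuclideanSpace ℝ (ι × Fin d)) : Prop :=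
  ∀ φ : Ed d → ℝ, ContDiff ℝ (⊤ : ℕ∞) φ → HasCompactSupport φ → tsupport φ ⊆ U →
    ∀ (a : ι) (i : Fin d),
      ∫ x in U, f x a * pder φ i x = - ∫ x in U, g x (a, i) * φ x


/-- Center of the dyadic subcube of generation `k`, index `m` (with `m i < 2^k`), of the cube
with center `c` and sidelength `R`. -/
def dyadicCenter {d : ℕ} (c : Ed d) (R : ℝ) (k : ℕ) (m : Fin d → ℕ) : Ed d :=
  (WithLp.equiv 2 _).symm fun i => c i - R / 2 + R / 2 ^ k * ((m i : ℝ) + 1 / 2)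

/-- The `scale`-fold dilate of the dyadic subcube of generation `k`, index `m`, of the cube
with center `c` and sidelength `R`. -/
def dyadicCube {d : ℕ} (c : Ed d) (R : ℝ) (k : ℕ) (m : Fin d → ℕ) (scale : ℝ) :
    Set (Ed d) :=
  cube (dyadicCenter c R k m) (scale * (R / 2 ^ k))

/-!
Put `u = |w|^r` and let `M` be the maximal function over the `4`-fold dilates of the dyadic subcubes
of `Q`. The core is a good-`λ` inequality
`|{M u > N λ, M (|f|^r) ≤ δ λ, M (|g|^r) ≤ λ}| ≤ 2 η |{M u > λ}|`
for every `λ` above the average of `u` over `4Q`. Decompose `{M u > λ}` into the dyadic cubes that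
are maximal among those whose `4`-fold dilate has average above `λ`. On the predecessor `Q̃` of such
a cube the average over `4Q̃` is still at most `λ`, so (3) makes the average of `|w - w_a|^r` at
most `ε λ + C δ λ`, while (1) and (2) bound the average of `|w_a|^t` by a multiple of `λ^(t/r)`. The
weak type `(1, 1)` bound for `M`, applied to `|w - w_a|^r` and to `|w_a|^t`, then gives the
inequality with `η ∼ (ε + δ) / N + N^(-t/r)`. Multiplying by `λ^(s/r - 1)` and integrating costs a
factor `N^(s/r)`. As `s < t`, a large `N` followed by small `ε` and `δ` makes `2 η N^(s/r) ≤ 1/2`,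
and the `u`-term is absorbed after truncation. The strong type bound for `M (|f|^r)` and
`M (|g|^r)` and Lebesgue differentiation finish the proof.
-/

section Cubes

variable {d : ℕ}

lemma cube_eq_preimage_pi_Ioo (c : Ed d) (R : ℝ) :
    cube c R = WithLp.ofLp ⁻¹' univ.pi fun i => Ioo (c i - R / 2) (c i + R / 2) := by
  ext x
  simp only [cube, mem_ofPred_eq, mem_preimage, mem_univ_pi, mem_Ioo, abs_lt]
  refine forall_congr' fun i => and_congr ?_ ?_ <;> constructor <;> intro h <;> linarith

lemma measurableSet_pi_Ioo (a b : Fin d → ℝ) :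
    MeasurableSet (univ.pi fun i => Ioo (a i) (b i)) :=
  .univ_pi fun _ => measurableSet_Ioo

lemma measurableSet_cube (c : Ed d) (R : ℝ) : MeasurableSet (cube c R) := by
  rw [cube_eq_preimage_pi_Ioo]
  exact measurableSet_preimage (by fun_prop) (measurableSet_pi_Ioo _ _)

lemma volume_cube (c : Ed d) (R : ℝ) : volume (cube c R) = ENNReal.ofReal R ^ d := by
  rw [cube_eq_preimage_pi_Ioo, (PiLp.volume_preserving_ofLp (Fin d)).measure_preimage
    (measurableSet_pi_Ioo _ _).nullMeasurableSet, Real.volume_pi_Ioo]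
  simp [show ∀ i, c i + R / 2 - (c i - R / 2) = R from fun i => by ring]

lemma volume_cube_ne_zero (c : Ed d) {R : ℝ} (hR : 0 < R) : volume (cube c R) ≠ 0 := by
  simp [volume_cube, hR]

lemma volume_cube_ne_top (c : Ed d) (R : ℝ) : volume (cube c R) ≠ ∞ := by
  simp [volume_cube]

lemma cube_subset_cube {c c' : Ed d} {R R' : ℝ} (h : ∀ i, |c' i - c i| ≤ (R - R') / 2) :
    cube c' R' ⊆ cube c R := fun x hx i => by
  linarith [hx i, h i, abs_sub_le (x i) (c' i) (c i)]

end Cubes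

section DyadicCubes

variable {d : ℕ} {c : Ed d} {R : ℝ} {k j : ℕ} {m : Fin d → ℕ} {x y : Ed d} {a b : ℝ}

/-- The coordinates of `x` in which the corner `c - R / 2` of the cube with center `c` and
sidelength `R` is the origin and its dyadic subcubes of generation `k` have sidelength `1`. -/
def dyadicCoord (c : Ed d) (R : ℝ) (k : ℕ) (x : Ed d) (i : Fin d) : ℝ :=
  (x i - (c i - R / 2)) / R * 2 ^ k

/-- The index of the dyadic subcube of generation `k` containing `x`, the subcubes being made
half-open so that they partition the cube. -/
def dyadicIndex (c : Ed d) (R : ℝ) (k : ℕ) (x : Ed d) : Fin d → ℕ :=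
  fun i => ⌊dyadicCoord c R k x i⌋₊

/-- The `a`-fold dilate of the dyadic subcube of generation `k` containing `x`. -/
def dyadicCubeAt (c : Ed d) (R : ℝ) (k : ℕ) (x : Ed d) (a : ℝ) : Set (Ed d) :=
  dyadicCube c R k (dyadicIndex c R k x) a

lemma mem_cube_iff_dyadicCoord (hR : 0 < R) (k : ℕ) :
    x ∈ cube c R ↔ ∀ i, 0 < dyadicCoord c R k x i ∧ dyadicCoord c R k x i < 2 ^ k := by
  refine forall_congr' fun i => ?_
  have hk : (0 : ℝ) < 2 ^ k := by positivity
  rw [dyadicCoord, mul_pos_iff_of_pos_right hk, mul_lt_iff_lt_one_left hk,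
    div_pos_iff_of_pos_right hR, div_lt_one hR, abs_lt]
  constructor <;> rintro ⟨_, _⟩ <;> constructor <;> linarith

lemma mem_dyadicCube_iff_dyadicCoord (hR : 0 < R) :
    x ∈ dyadicCube c R k m a ↔ ∀ i, |dyadicCoord c R k x i - (m i + 1 / 2)| < a / 2 := by
  refine forall_congr' fun i => ?_
  have hl : 0 < R / 2 ^ k := by positivity
  have hx : x i - dyadicCenter c R k m i =
      R / 2 ^ k * (dyadicCoord c R k x i - (m i + 1 / 2)) := by
    change x i - (c i - R / 2 + R / 2 ^ k * (m i + 1 / 2)) = _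
    rw [dyadicCoord]
    field_simp
    ring
  rw [hx, abs_mul, abs_of_pos hl, show a * (R / 2 ^ k) / 2 = R / 2 ^ k * (a / 2) by ring,
    mul_lt_mul_iff_right₀ hl]

lemma measurable_dyadicIndex (c : Ed d) (R : ℝ) (k : ℕ) : Measurable (dyadicIndex c R k) := by
  refine measurable_pi_lambda _ fun i => Nat.measurable_floor.comp ?_
  unfold dyadicCoord
  fun_prop

lemma dyadicIndex_succ_div_two (c : Ed d) (R : ℝ) (k : ℕ) (x : Ed d) :
    (fun i => dyadicIndex c R (k + 1) x i / 2) = dyadicIndex c R k x := by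
  funext i
  rw [dyadicIndex, dyadicIndex, ← Nat.floor_div_natCast, dyadicCoord, dyadicCoord, pow_succ,
    ← mul_assoc, Nat.cast_ofNat, mul_div_cancel_right₀ _ two_ne_zero]

lemma dyadicIndex_eq_of_le (hjk : j ≤ k) (h : dyadicIndex c R k x = dyadicIndex c R k y) :
    dyadicIndex c R j x = dyadicIndex c R j y := by
  induction k, hjk using Nat.le_induction with
  | base => exact h
  | succ k _ ih =>
    exact ih (by rw [← dyadicIndex_succ_div_two, h, dyadicIndex_succ_div_two])

lemma dyadicCubeAt_congr (hjk : j ≤ k) (h : dyadicIndex c R k x = dyadicIndex c R k y) (a : ℝ) :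
    dyadicCubeAt c R j x a = dyadicCubeAt c R j y a := by
  rw [dyadicCubeAt, dyadicIndex_eq_of_le hjk h, dyadicCubeAt]

lemma dyadicIndex_lt (hR : 0 < R) (k : ℕ) (hx : x ∈ cube c R) (i : Fin d) :
    dyadicIndex c R k x i < 2 ^ k := by
  obtain ⟨h0, h1⟩ := (mem_cube_iff_dyadicCoord hR k).1 hx i
  rw [dyadicIndex, Nat.floor_lt h0.le]
  exact_mod_cast h1

lemma mem_dyadicCubeAt (hR : 0 < R) (k : ℕ) (hx : x ∈ cube c R) (ha : 1 < a) :
    x ∈ dyadicCubeAt c R k x a := by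
  refine (mem_dyadicCube_iff_dyadicCoord hR).2 fun i => abs_lt.2 ?_
  have hlo := Nat.floor_le ((mem_cube_iff_dyadicCoord hR k).1 hx i).1.le
  have hhi := Nat.lt_floor_add_one (dyadicCoord c R k x i)
  rw [dyadicIndex]
  constructor <;> linarith

lemma mem_cube_of_mem_dyadicCube_one (hR : 0 < R) (hm : ∀ i, m i < 2 ^ k)
    (hx : x ∈ dyadicCube c R k m 1) : x ∈ cube c R := by
  refine (mem_cube_iff_dyadicCoord hR k).2 fun i => ?_
  have hxi := abs_lt.1 ((mem_dyadicCube_iff_dyadicCoord hR).1 hx i)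
  have hhi : (m i : ℝ) + 1 ≤ 2 ^ k := by exact_mod_cast hm i
  constructor <;> linarith

lemma dyadicIndex_eq_of_mem_dyadicCube_one (hR : 0 < R) (hx : x ∈ dyadicCube c R k m 1) :
    dyadicIndex c R k x = m := by
  funext i
  have hxi := abs_lt.1 ((mem_dyadicCube_iff_dyadicCoord hR).1 hx i)
  exact (Nat.floor_eq_iff (by linarith)).2 ⟨by linarith, by linarith⟩

lemma dyadicCenter_mem_dyadicCube (hR : 0 < R) (ha : 0 < a) (k : ℕ) (m : Fin d → ℕ) :
    dyadicCenter c R k m ∈ dyadicCube c R k m a := fun i => by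
  rw [sub_self, abs_zero]
  positivity

lemma abs_dyadicCenter_succ_sub_le (c : Ed d) (hR : 0 ≤ R) (k : ℕ) (m : Fin d → ℕ) (i : Fin d) :
    |dyadicCenter c R (k + 1) m i - dyadicCenter c R k (fun i => m i / 2) i| ≤
      (R / 2 ^ k - R / 2 ^ (k + 1)) / 2 := by
  change |c i - R / 2 + R / 2 ^ (k + 1) * (m i + 1 / 2) -
    (c i - R / 2 + R / 2 ^ k * ((m i / 2 : ℕ) + 1 / 2))| ≤ _
  have hmod : (m i : ℝ) = 2 * (m i / 2 : ℕ) + (m i % 2 : ℕ) := by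
    exact_mod_cast (Nat.div_add_mod (m i) 2).symm
  have hhi : ((m i % 2 : ℕ) : ℝ) ≤ 1 := by
    exact_mod_cast Nat.le_of_lt_succ (Nat.mod_lt (m i) two_pos)
  have hl : 0 ≤ R / 2 ^ k := by positivity
  rw [hmod, pow_succ, ← div_div, abs_le]
  constructor <;> nlinarith

lemma abs_dyadicCenter_dyadicIndex_sub_le (hR : 0 ≤ R) (hkj : k ≤ j) (x : Ed d) (i : Fin d) :
    |dyadicCenter c R j (dyadicIndex c R j x) i - dyadicCenter c R k (dyadicIndex c R k x) i| ≤
      (R / 2 ^ k - R / 2 ^ j) / 2 := by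
  induction j, hkj using Nat.le_induction with
  | base => simp
  | succ j _ ih =>
    have hstep := abs_dyadicCenter_succ_sub_le c hR j (dyadicIndex c R (j + 1) x) i
    rw [dyadicIndex_succ_div_two] at hstep
    exact (abs_sub_le _ (dyadicCenter c R j (dyadicIndex c R j x) i) _).trans (by linarith)

lemma dyadicCubeAt_subset_of_le (hR : 0 ≤ R) (ha : 1 ≤ a) (hkj : k ≤ j) (x : Ed d) :
    dyadicCubeAt c R j x a ⊆ dyadicCubeAt c R k x a := by
  refine cube_subset_cube fun i => (abs_dyadicCenter_dyadicIndex_sub_le hR hkj x i).trans ?_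
  have hjk : R / 2 ^ j ≤ R / 2 ^ k := by gcongr; norm_num
  nlinarith

lemma dyadicCubeAt_four_subset_two (hR : 0 ≤ R) (hkj : k + 2 ≤ j) (x : Ed d) :
    dyadicCubeAt c R j x 4 ⊆ dyadicCubeAt c R k x 2 := by
  refine cube_subset_cube fun i =>
    (abs_dyadicCenter_dyadicIndex_sub_le hR (le_of_add_le_left hkj) x i).trans ?_
  have hjk : R / 2 ^ j ≤ R / 2 ^ (k + 2) := by gcongr; norm_num
  have hk : R / 2 ^ (k + 2) = R / 2 ^ k / 4 := by rw [pow_add, ← div_div]; norm_num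
  have hl : 0 ≤ R / 2 ^ k := by positivity
  linarith

lemma dyadicCube_subset_of_le (hR : 0 ≤ R) (hab : a ≤ b) :
    dyadicCube c R k m a ⊆ dyadicCube c R k m b :=
  cube_subset_cube fun i => by
    rw [sub_self, abs_zero, ← sub_mul]
    have := sub_nonneg.2 hab
    positivity

lemma dyadicCube_zero_zero (c : Ed d) (R a : ℝ) : dyadicCube c R 0 0 a = cube c (a * R) := by
  have hc : dyadicCenter c R 0 0 = c := by
    ext i
    change c i - R / 2 + R / 2 ^ 0 * (((0 : ℕ) : ℝ) + 1 / 2) = c i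
    norm_num
    ring
  rw [dyadicCube, hc, pow_zero, div_one]

lemma dyadicCubeAt_zero (hR : 0 < R) (hx : x ∈ cube c R) (a : ℝ) :
    dyadicCubeAt c R 0 x a = cube c (a * R) := by
  have hidx : dyadicIndex c R 0 x = 0 := funext fun i => by simpa using dyadicIndex_lt hR 0 hx i
  rw [dyadicCubeAt, hidx, dyadicCube_zero_zero]

lemma dyadicCubeAt_subset_cube (hR : 0 < R) (ha : 1 ≤ a) (k : ℕ) (hx : x ∈ cube c R) :
    dyadicCubeAt c R k x a ⊆ cube c (a * R) :=
  dyadicCubeAt_zero hR hx a ▸ dyadicCubeAt_subset_of_le hR.le ha k.zero_le x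

lemma measurableSet_dyadicCube (c : Ed d) (R : ℝ) (k : ℕ) (m : Fin d → ℕ) (a : ℝ) :
    MeasurableSet (dyadicCube c R k m a) :=
  measurableSet_cube _ _

lemma volume_dyadicCube_ne_zero (hR : 0 < R) (ha : 0 < a) : volume (dyadicCube c R k m a) ≠ 0 :=
  volume_cube_ne_zero _ (by positivity)

lemma volume_dyadicCube_ne_top : volume (dyadicCube c R k m a) ≠ ∞ :=
  volume_cube_ne_top _ _

lemma volume_dyadicCube_mul (hb : 0 ≤ b) (m' : Fin d → ℕ) :
    volume (dyadicCube c R k m (b * a)) =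
      ENNReal.ofReal b ^ d * volume (dyadicCube c R k m' a) := by
  rw [dyadicCube, dyadicCube, volume_cube, volume_cube, mul_assoc, ENNReal.ofReal_mul hb, mul_pow]

lemma volume_dyadicCube_succ (m' : Fin d → ℕ) :
    volume (dyadicCube c R k m a) = 2 ^ d * volume (dyadicCube c R (k + 1) m' a) := by
  rw [dyadicCube, dyadicCube, volume_cube, volume_cube, ← ENNReal.ofReal_ofNat 2, ← mul_pow,
    ← ENNReal.ofReal_mul zero_le_two]
  congr 2
  rw [pow_succ]
  field_simp

end DyadicCubes

section Averages

variable {α : Type*} [MeasurableSpace α] {μ : Measure α} {s t : Set α} {f g : α → ℝ≥0∞}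

lemma setLAverage_mono (hs : MeasurableSet s) (h : ∀ x ∈ s, f x ≤ g x) :
    ⨍⁻ x in s, f x ∂μ ≤ ⨍⁻ x in s, g x ∂μ :=
  laverage_mono_ae (ae_restrict_of_forall_mem hs h)

lemma setLAverage_add (hf : AEMeasurable f (μ.restrict s)) :
    ⨍⁻ x in s, (f x + g x) ∂μ = ⨍⁻ x in s, f x ∂μ + ⨍⁻ x in s, g x ∂μ := by
  simp only [setLAverage_eq, lintegral_add_left' hf, ENNReal.add_div]

lemma setLAverage_const_mul {a : ℝ≥0∞} (ha : a ≠ ∞) :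
    ⨍⁻ x in s, a * f x ∂μ = a * ⨍⁻ x in s, f x ∂μ := by
  simp only [setLAverage_eq, lintegral_const_mul' _ _ ha, mul_div_assoc]

lemma setLAverage_le_mul_of_subset {B : ℝ≥0∞} (hst : s ⊆ t) (hs : μ s ≠ 0) (ht : μ t ≠ ∞)
    (hB : μ t = B * μ s) : ⨍⁻ x in s, f x ∂μ ≤ B * ⨍⁻ x in t, f x ∂μ := by
  have hs' : μ s ≠ ∞ := measure_ne_top_of_subset hst ht
  rw [setLAverage_eq, ENNReal.div_le_iff hs hs', mul_right_comm, ← hB,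
    measure_mul_setLAverage _ ht]
  exact lintegral_mono_set hst

lemma rpow_setLAverage_le {q : ℝ} (hq : 1 ≤ q) (hs₀ : μ s ≠ 0) (hs : μ s ≠ ∞)
    (hf : AEMeasurable f (μ.restrict s)) :
    (⨍⁻ x in s, f x ∂μ) ^ q ≤ ⨍⁻ x in s, f x ^ q ∂μ := by
  have hq₀ : 0 < q := by linarith
  have : IsProbabilityMeasure ((μ s)⁻¹ • μ.restrict s) :=
    ⟨by simp [ENNReal.inv_mul_cancel hs₀ hs]⟩
  have key := eLpNorm'_le_eLpNorm'_of_exponent_le one_pos hq ((μ s)⁻¹ • μ.restrict s)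
    (hf.smul_measure _).aestronglyMeasurable
  simp only [eLpNorm', enorm_eq_self, ENNReal.rpow_one, div_one] at key
  rw [setLAverage_eq', setLAverage_eq']
  exact (ENNReal.rpow_le_rpow key hq₀.le).trans_eq
    (by rw [← ENNReal.rpow_mul, one_div_mul_cancel hq₀.ne', ENNReal.rpow_one])

end Averages

section LayerCake

variable {α β : Type*} [MeasurableSpace α] [MeasurableSpace β] {μ : Measure α} {ν : Measure β}
  {φ H : α → ℝ≥0∞} {p : ℝ}

lemma setLIntegral_Ioi_ofReal_rpow (p : ℝ) :
    ∫⁻ t in Ioi (0 : ℝ), ENNReal.ofReal (t ^ p) = ∞ := by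
  by_contra h
  refine not_integrableOn_Ioi_rpow p ((lintegral_ofReal_ne_top_iff_integrable ?_ ?_).1 h)
  · exact (by fun_prop : Measurable fun t : ℝ => t ^ p).aestronglyMeasurable
  · exact ae_restrict_of_forall_mem measurableSet_Ioi fun t ht => Real.rpow_nonneg (le_of_lt ht) p

lemma lintegral_rpow_eq_lintegral_meas_ofReal_lt_mul (hφ : AEMeasurable φ μ) (hp : 0 < p) :
    ∫⁻ x, φ x ^ p ∂μ = ENNReal.ofReal p *
      ∫⁻ t in Ioi (0 : ℝ), μ {x | ENNReal.ofReal t < φ x} * ENNReal.ofReal (t ^ (p - 1)) := by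
  by_cases htop : ∀ᵐ x ∂μ, φ x ≠ ∞
  · have hlayer := lintegral_rpow_eq_lintegral_meas_lt_mul μ (f := fun x => (φ x).toReal)
      (ae_of_all _ fun x => ENNReal.toReal_nonneg) hφ.ennreal_toReal hp
    have hpow : ∫⁻ x, φ x ^ p ∂μ = ∫⁻ x, ENNReal.ofReal ((φ x).toReal ^ p) ∂μ := by
      refine lintegral_congr_ae (htop.mono fun x hx => ?_)
      simp only [← ENNReal.ofReal_rpow_of_nonneg ENNReal.toReal_nonneg hp.le,
        ENNReal.ofReal_toReal hx]
    rw [hpow, hlayer]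
    congr 1
    refine setLIntegral_congr_fun measurableSet_Ioi fun t ht => ?_
    refine congrArg (· * _) (measure_congr (htop.mono fun x hx => propext ?_))
    exact (ENNReal.ofReal_lt_iff_lt_toReal (le_of_lt ht) hx).symm
  · have hpos : μ {x | φ x = ∞} ≠ 0 := by simpa [ae_iff] using htop
    have hleft : ∫⁻ x, φ x ^ p ∂μ = ∞ := by
      refine lintegral_eq_top_of_measure_eq_top_ne_zero (hφ.pow_const p) ?_
      simpa [ENNReal.rpow_eq_top_iff, hp, hp.not_gt] using hpos
    have hright : ∞ ≤ ∫⁻ t in Ioi (0 : ℝ),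
        μ {x | ENNReal.ofReal t < φ x} * ENNReal.ofReal (t ^ (p - 1)) := by
      calc ∞ = μ {x | φ x = ∞} * ∫⁻ t in Ioi (0 : ℝ), ENNReal.ofReal (t ^ (p - 1)) := by
            rw [setLIntegral_Ioi_ofReal_rpow, ENNReal.mul_top hpos]
        _ = ∫⁻ t in Ioi (0 : ℝ), μ {x | φ x = ∞} * ENNReal.ofReal (t ^ (p - 1)) :=
            (lintegral_const_mul _ (by fun_prop)).symm
        _ ≤ _ := lintegral_mono fun t => by
            gcongr with x
            rintro hx
            simp [hx]
    rw [hleft, top_le_iff.1 hright, ENNReal.mul_top (by simpa using hp)]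

lemma lintegral_rpow_le_of_forall_mul_meas_lt_le [SFinite ν] {h : β → ℝ≥0∞} {A : ℝ≥0∞}
    (hp : 1 < p) (hφ : AEMeasurable φ μ) (hh : AEMeasurable h ν) (hA : A ≠ ∞)
    (hweak : ∀ l, l ≠ 0 → l ≠ ∞ →
      l * μ {x | l < φ x} ≤ A * ∫⁻ y in {y | l < 2 * h y}, h y ∂ν) :
    ∫⁻ x, φ x ^ p ∂μ ≤
      ENNReal.ofReal p * A * (ENNReal.ofReal (p - 1))⁻¹ * 2 ^ (p - 1) * ∫⁻ y, h y ^ p ∂ν := by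
  have hp₁ : 0 < p - 1 := by linarith
  have hlevel : ∀ t ∈ Ioi (0 : ℝ), μ {x | ENNReal.ofReal t < φ x} * ENNReal.ofReal (t ^ (p - 1)) ≤
      A * (ν.withDensity h {y | ENNReal.ofReal t < 2 * h y} *
        ENNReal.ofReal (t ^ (p - 1 - 1))) := by
    intro t ht
    have ht' : ENNReal.ofReal (t ^ (p - 1)) =
        ENNReal.ofReal t * ENNReal.ofReal (t ^ (p - 1 - 1)) := by
      rw [← ENNReal.ofReal_mul (le_of_lt ht), ← Real.rpow_one_add' (le_of_lt ht) (by linarith)]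
      ring_nf
    rw [ht', ← mul_assoc, ← mul_assoc, mul_comm (μ _), withDensity_apply']
    exact mul_le_mul_left (hweak _ (by simpa using ht) ENNReal.ofReal_ne_top) _
  have hdensity : ∫⁻ y, (2 * h y) ^ (p - 1) ∂ν.withDensity h =
      2 ^ (p - 1) * ∫⁻ y, h y ^ p ∂ν := by
    rw [lintegral_withDensity_eq_lintegral_mul₀ hh (by fun_prop),
      ← lintegral_const_mul'' _ (by fun_prop)]
    refine lintegral_congr fun y => ?_
    rw [Pi.mul_apply, ENNReal.mul_rpow_of_nonneg _ _ hp₁.le, mul_left_comm]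
    nth_rw 1 [← ENNReal.rpow_one (h y)]
    rw [← ENNReal.rpow_add_of_nonneg _ _ zero_le_one hp₁.le, add_sub_cancel]
  have hlayer := lintegral_rpow_eq_lintegral_meas_ofReal_lt_mul
    ((hh.const_mul 2).mono_ac (withDensity_absolutelyContinuous ν h)) hp₁
  rw [lintegral_rpow_eq_lintegral_meas_ofReal_lt_mul hφ (by linarith),
    mul_assoc _ (2 ^ (p - 1)), ← hdensity, hlayer, mul_assoc _ (_)⁻¹, ← mul_assoc (_)⁻¹,
    ENNReal.inv_mul_cancel (by simpa using hp₁) (by simp),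
    one_mul, mul_assoc, ← lintegral_const_mul' _ _ hA]
  exact mul_le_mul_right (setLIntegral_mono' measurableSet_Ioi hlevel) _

lemma lintegral_rpow_le_of_forall_meas_mul_lt_le {N η : ℝ≥0∞} (hp : 0 < p) (hN₀ : N ≠ 0)
    (hN : N ≠ ∞) (hφ : AEMeasurable φ μ) (hH : AEMeasurable H μ) (hη : η ≠ ∞)
    (hgood : ∀ l, l ≠ 0 → l ≠ ∞ →
      μ {x | N * l < φ x} ≤ η * μ {x | l < φ x} + μ {x | l < H x}) :
    ∫⁻ x, φ x ^ p ∂μ ≤ N ^ p * (η * ∫⁻ x, φ x ^ p ∂μ + ∫⁻ x, H x ^ p ∂μ) := by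
  have hscale : ∫⁻ x, φ x ^ p ∂μ = N ^ p * ∫⁻ x, (N⁻¹ * φ x) ^ p ∂μ := by
    rw [← lintegral_const_mul' _ _ (ENNReal.rpow_ne_top_of_nonneg hp.le hN)]
    refine lintegral_congr fun x => ?_
    rw [← ENNReal.mul_rpow_of_nonneg _ _ hp.le, ENNReal.mul_inv_cancel_left hN₀ hN]
  have hlevel : ∀ t ∈ Ioi (0 : ℝ),
      μ {x | ENNReal.ofReal t < N⁻¹ * φ x} * ENNReal.ofReal (t ^ (p - 1)) ≤
        η * (μ {x | ENNReal.ofReal t < φ x} * ENNReal.ofReal (t ^ (p - 1))) +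
          μ {x | ENNReal.ofReal t < H x} * ENNReal.ofReal (t ^ (p - 1)) := fun t ht => by
    have hset : {x | ENNReal.ofReal t < N⁻¹ * φ x} = {x | N * ENNReal.ofReal t < φ x} := by
      ext x
      rw [mem_ofPred_eq, mem_ofPred_eq, ← ENNReal.mul_lt_mul_iff_right hN₀ hN,
        ENNReal.mul_inv_cancel_left hN₀ hN]
    rw [hset, ← mul_assoc, ← add_mul]
    gcongr
    exact hgood _ (by simpa using ht) ENNReal.ofReal_ne_top
  have hanti : Antitone fun t : ℝ => μ {x | ENNReal.ofReal t < H x} :=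
    fun a b hab => measure_mono fun x hx => (ENNReal.ofReal_le_ofReal hab).trans_lt hx
  have hmeas : Measurable fun t : ℝ =>
      μ {x | ENNReal.ofReal t < H x} * ENNReal.ofReal (t ^ (p - 1)) :=
    hanti.measurable.mul (by fun_prop)
  nth_rw 1 [hscale]
  gcongr
  rw [lintegral_rpow_eq_lintegral_meas_ofReal_lt_mul (by fun_prop) hp,
    lintegral_rpow_eq_lintegral_meas_ofReal_lt_mul hφ hp,
    lintegral_rpow_eq_lintegral_meas_ofReal_lt_mul hH hp, mul_left_comm, ← mul_add,
    ← lintegral_const_mul' _ _ hη, ← lintegral_add_right _ hmeas]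
  exact mul_le_mul_right (setLIntegral_mono' measurableSet_Ioi hlevel) _

lemma meas_mul_lt_min_le {N η l a : ℝ≥0∞} (hN : 1 ≤ N)
    (hgood : μ {x | N * l < φ x} ≤ η * μ {x | l < φ x} + μ {x | l < H x}) :
    μ {x | N * l < min (φ x) a} ≤ η * μ {x | l < min (φ x) a} + μ {x | l < H x} := by
  rcases lt_or_ge (N * l) a with hla | hla
  · have hla' : l < a := (le_mul_of_one_le_left' hN).trans_lt hla
    simpa only [lt_min_iff, hla, hla', and_true] using hgood
  · simp [hla.not_gt]

lemma lintegral_rpow_eq_iSup_lintegral_min_natCast (hp : 0 ≤ p) (hφ : AEMeasurable φ μ) :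
    ∫⁻ x, φ x ^ p ∂μ = ⨆ n : ℕ, ∫⁻ x, (min (φ x) n) ^ p ∂μ := by
  have hmono : ∀ x, Monotone fun n : ℕ => (min (φ x) n) ^ p := fun x n n' hn => by
    dsimp only
    gcongr
  have hsup : ∀ x, φ x ^ p = ⨆ n : ℕ, (min (φ x) n) ^ p := fun x => by
    refine (iSup_eq_of_tendsto (hmono x) (Tendsto.ennrpow_const p ?_)).symm
    simpa using tendsto_const_nhds.min ENNReal.tendsto_nat_nhds_top
  rw [lintegral_congr hsup, lintegral_iSup' (fun n => (hφ.min aemeasurable_const).pow_const p)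
    (ae_of_all _ hmono)]

lemma le_two_mul_of_le_half_mul_add {a b : ℝ≥0∞} (ha : a ≠ ∞) (h : a ≤ 1 / 2 * a + b) :
    a ≤ 2 * b := by
  have hhalf : 1 / 2 * a ≤ b := by
    refine (ENNReal.add_le_add_iff_left (ENNReal.mul_ne_top (by simp) ha)).1 (h.trans_eq' ?_)
    rw [← add_mul, ENNReal.add_halves, one_mul]
  calc a = 2 * (1 / 2 * a) := by rw [one_div, ENNReal.mul_inv_cancel_left (by simp) (by simp)]
    _ ≤ 2 * b := by gcongr

/-- Truncating `φ` preserves the good-`λ` inequality and makes the `L^p` norm finite, so that the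
term `η * ∫ φ ^ p` can be absorbed. -/
lemma lintegral_rpow_le_of_goodLambda [IsFiniteMeasure μ] {N η : ℝ≥0∞} (hp : 0 < p) (hN₁ : 1 ≤ N)
    (hN : N ≠ ∞) (hφ : AEMeasurable φ μ) (hH : AEMeasurable H μ) (hη : η * N ^ p ≤ 1 / 2)
    (hgood : ∀ l, l ≠ 0 → l ≠ ∞ →
      μ {x | N * l < φ x} ≤ η * μ {x | l < φ x} + μ {x | l < H x}) :
    ∫⁻ x, φ x ^ p ∂μ ≤ 2 * N ^ p * ∫⁻ x, H x ^ p ∂μ := by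
  have hN₀ : N ≠ 0 := (one_pos.trans_le hN₁).ne'
  have hη_top : η ≠ ∞ := by
    rintro rfl
    rw [ENNReal.top_mul (by simp [ENNReal.rpow_eq_zero_iff, hN₀, hN])] at hη
    simp at hη
  rw [lintegral_rpow_eq_iSup_lintegral_min_natCast hp.le hφ]
  refine iSup_le fun n => ?_
  have hfinite : ∫⁻ x, (min (φ x) n) ^ p ∂μ ≠ ∞ :=
    ((lintegral_mono fun x => ENNReal.rpow_le_rpow (min_le_right _ _) hp.le).trans_lt
      (lintegral_const_lt_top
        (ENNReal.rpow_ne_top_of_nonneg hp.le (ENNReal.natCast_ne_top n)))).ne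
  have hbound := lintegral_rpow_le_of_forall_meas_mul_lt_le hp hN₀ hN
    (hφ.min aemeasurable_const) hH hη_top
    fun l hl hl' => meas_mul_lt_min_le (a := n) hN₁ (hgood l hl hl')
  rw [mul_assoc]
  refine le_two_mul_of_le_half_mul_add hfinite (hbound.trans ?_)
  rw [mul_add, ← mul_assoc, mul_comm (N ^ p) η]
  gcongr

end LayerCake

section MaximalFunction

variable {d : ℕ} {c : Ed d} {R : ℝ} {h : Ed d → ℝ≥0∞} {x : Ed d} {l : ℝ≥0∞}

/-- The maximal function of `h` over the four-fold dilates of the dyadic subcubes of the cube with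
center `c` and sidelength `R`. -/
def dyadicMaximal (c : Ed d) (R : ℝ) (h : Ed d → ℝ≥0∞) (x : Ed d) : ℝ≥0∞ :=
  ⨆ k, ⨍⁻ y in dyadicCubeAt c R k x 4, h y ∂volume

lemma setLAverage_le_dyadicMaximal (c : Ed d) (R : ℝ) (h : Ed d → ℝ≥0∞) (k : ℕ) (x : Ed d) :
    ⨍⁻ y in dyadicCubeAt c R k x 4, h y ∂volume ≤ dyadicMaximal c R h x :=
  le_iSup (fun k => ⨍⁻ y in dyadicCubeAt c R k x 4, h y ∂volume) k

lemma lt_dyadicMaximal_iff :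
    l < dyadicMaximal c R h x ↔ ∃ k, l < ⨍⁻ y in dyadicCubeAt c R k x 4, h y ∂volume :=
  lt_iSup_iff

lemma measurable_setLAverage_dyadicCubeAt (c : Ed d) (R : ℝ) (h : Ed d → ℝ≥0∞) (k : ℕ) :
    Measurable fun x => ⨍⁻ y in dyadicCubeAt c R k x 4, h y ∂volume :=
  (Measurable.of_discrete (f := fun m => ⨍⁻ y in dyadicCube c R k m 4, h y ∂volume)).comp
    (measurable_dyadicIndex c R k)

lemma measurable_dyadicMaximal (c : Ed d) (R : ℝ) (h : Ed d → ℝ≥0∞) :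
    Measurable (dyadicMaximal c R h) :=
  .iSup fun k => measurable_setLAverage_dyadicCubeAt c R h k

lemma dyadicMaximal_le_add_indicator (hR : 0 < R) (h : Ed d → ℝ≥0∞) (l : ℝ≥0∞) (x : Ed d) :
    dyadicMaximal c R h x ≤ l + dyadicMaximal c R ({y | l < h y}.indicator h) x := by
  refine iSup_le fun k => ?_
  calc ⨍⁻ y in dyadicCubeAt c R k x 4, h y ∂volume
      ≤ ⨍⁻ y in dyadicCubeAt c R k x 4, (l + {y | l < h y}.indicator h y) ∂volume := by
        refine setLAverage_mono (measurableSet_dyadicCube ..) fun y _ => ?_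
        by_cases hy : l < h y
        · rw [indicator_of_mem (by exact hy)]
          exact le_add_self
        · exact (not_lt.1 hy).trans le_self_add
    _ = l + ⨍⁻ y in dyadicCubeAt c R k x 4, {y | l < h y}.indicator h y ∂volume := by
        rw [setLAverage_add aemeasurable_const, dyadicCubeAt, setLAverage_const
          (volume_dyadicCube_ne_zero hR four_pos) volume_dyadicCube_ne_top]
    _ ≤ _ := add_le_add_right (setLAverage_le_dyadicMaximal ..) _

lemma exists_pairwiseDisjoint_dyadicCube_covering (c : Ed d) (hR : 0 < R)
    (T : Set (ℕ × (Fin d → ℕ))) :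
    ∃ u ⊆ T, u.PairwiseDisjoint (fun a => dyadicCube c R a.1 a.2 4) ∧
      ∀ a ∈ T, ∃ b ∈ u, dyadicCube c R a.1 a.2 4 ⊆ dyadicCube c R b.1 b.2 20 := by
  obtain ⟨u, huT, hdisj, hcov⟩ := Vitali.exists_disjoint_subfamily_covering_enlargement
    (fun a : ℕ × (Fin d → ℕ) => dyadicCube c R a.1 a.2 4) T (fun a => R / 2 ^ a.1) 2 one_lt_two
    (fun a _ => by positivity) R (fun a _ => div_le_self hR.le (one_le_pow₀ one_le_two))
    (fun a _ => ⟨_, dyadicCenter_mem_dyadicCube hR four_pos a.1 a.2⟩)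
  refine ⟨u, huT, hdisj, fun a ha => ?_⟩
  obtain ⟨b, hb, ⟨y, hya, hyb⟩, hside⟩ := hcov a ha
  refine ⟨b, hb, fun x hx i => ?_⟩
  have hxa := hx i
  have hay := abs_sub_comm (y i) _ ▸ hya i
  have hyb := hyb i
  linarith [abs_sub_le (x i) (dyadicCenter c R a.1 a.2 i) (dyadicCenter c R b.1 b.2 i),
    abs_sub_le (dyadicCenter c R a.1 a.2 i) (y i) (dyadicCenter c R b.1 b.2 i)]

lemma mul_volume_lt_dyadicMaximal_le (hR : 0 < R) (h : Ed d → ℝ≥0∞) (l : ℝ≥0∞) :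
    l * volume ({x | l < dyadicMaximal c R h x} ∩ cube c R) ≤
      5 ^ d * ∫⁻ x in cube c (4 * R), h x := by
  obtain ⟨u, huT, hdisj, hcov⟩ := exists_pairwiseDisjoint_dyadicCube_covering c hR
    {a | l < ⨍⁻ y in dyadicCube c R a.1 a.2 4, h y ∂volume ∧
      dyadicCube c R a.1 a.2 4 ⊆ cube c (4 * R)}
  have hsub : {x | l < dyadicMaximal c R h x} ∩ cube c R ⊆
      ⋃ a ∈ u, dyadicCube c R a.1 a.2 20 := by
    rintro x ⟨hlx, hx⟩
    obtain ⟨k, hk⟩ := lt_dyadicMaximal_iff.1 hlx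
    obtain ⟨b, hb, hxb⟩ := hcov (k, dyadicIndex c R k x)
      ⟨hk, dyadicCubeAt_subset_cube hR (by norm_num) k hx⟩
    exact mem_biUnion hb (hxb (mem_dyadicCubeAt hR k hx (by norm_num)))
  calc l * volume ({x | l < dyadicMaximal c R h x} ∩ cube c R)
      ≤ l * ∑' a : u, volume (dyadicCube c R a.1.1 a.1.2 20) := by
        gcongr
        exact (measure_mono hsub).trans (measure_biUnion_le _ (to_countable u) _)
    _ = 5 ^ d * ∑' a : u, l * volume (dyadicCube c R a.1.1 a.1.2 4) := by
        rw [← ENNReal.tsum_mul_left, ← ENNReal.tsum_mul_left]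
        refine tsum_congr fun a => ?_
        rw [show (20 : ℝ) = 5 * 4 by norm_num, volume_dyadicCube_mul (by norm_num) a.1.2,
          ENNReal.ofReal_ofNat, mul_left_comm]
    _ ≤ 5 ^ d * ∑' a : u, ∫⁻ x in dyadicCube c R a.1.1 a.1.2 4, h x := by
        gcongr with a
        rw [← measure_mul_setLAverage _ volume_dyadicCube_ne_top, mul_comm]
        gcongr
        exact (huT a.2).1.le
    _ = 5 ^ d * ∫⁻ x in ⋃ a ∈ u, dyadicCube c R a.1 a.2 4, h x := by
        rw [lintegral_biUnion (to_countable u) (fun a _ => measurableSet_dyadicCube ..) hdisj]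
    _ ≤ 5 ^ d * ∫⁻ x in cube c (4 * R), h x := by
        gcongr
        exact iUnion₂_subset fun a ha => (huT ha).2

/-- The norm of the dyadic maximal operator from `L^p(4Q)` to `L^p(Q)` to the power `p` is at most
this constant, which comes from interpolating between `L^1` and `L^∞`. -/
def maximalConst (d : ℕ) (p : ℝ) : ℝ≥0∞ :=
  ENNReal.ofReal p * (2 * 5 ^ d) * (ENNReal.ofReal (p - 1))⁻¹ * 2 ^ (p - 1)

lemma maximalConst_ne_top (d : ℕ) {p : ℝ} (hp : 1 < p) : maximalConst d p ≠ ∞ := by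
  have hp' : (2 : ℝ≥0∞) ^ (p - 1) ≠ ∞ :=
    ENNReal.rpow_ne_top_of_nonneg (by linarith) ENNReal.ofNat_ne_top
  have : (ENNReal.ofReal (p - 1))⁻¹ ≠ ∞ := by simpa using hp
  unfold maximalConst
  finiteness

lemma setLIntegral_dyadicMaximal_rpow_le {p : ℝ} (hp : 1 < p) (hR : 0 < R)
    (hh : AEMeasurable h (volume.restrict (cube c (4 * R)))) :
    ∫⁻ x in cube c R, dyadicMaximal c R h x ^ p ≤
      maximalConst d p * ∫⁻ x in cube c (4 * R), h x ^ p := by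
  refine lintegral_rpow_le_of_forall_mul_meas_lt_le hp
    (measurable_dyadicMaximal c R h).aemeasurable hh (by finiteness) fun l _ _ => ?_
  have hsub : {x | l < dyadicMaximal c R h x} ⊆
      {x | l / 2 < dyadicMaximal c R ({y | l / 2 < h y}.indicator h) x} := fun x hx => by
    have := (show l < _ from hx).trans_le (dyadicMaximal_le_add_indicator hR h (l / 2) x)
    nth_rw 1 [← ENNReal.add_halves l] at this
    exact lt_of_add_lt_add_left this
  have hset : {y | l / 2 < h y} = {y | l < 2 * h y} := by
    ext y
    rw [mem_ofPred_eq, mem_ofPred_eq, ENNReal.div_lt_iff (by simp) (by simp), mul_comm]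
  rw [Measure.restrict_apply (measurableSet_lt measurable_const (measurable_dyadicMaximal c R h))]
  calc l * volume ({x | l < dyadicMaximal c R h x} ∩ cube c R)
      ≤ l * volume ({x | l / 2 < dyadicMaximal c R ({y | l / 2 < h y}.indicator h) x} ∩
          cube c R) := by gcongr
    _ = 2 * (l / 2 * volume ({x | l / 2 < dyadicMaximal c R ({y | l / 2 < h y}.indicator h) x} ∩
          cube c R)) := by
        rw [← mul_assoc, ENNReal.mul_div_cancel (by simp) (by simp)]
    _ ≤ 2 * (5 ^ d * ∫⁻ x in cube c (4 * R), {y | l / 2 < h y}.indicator h x) := by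
        exact mul_le_mul_right (mul_volume_lt_dyadicMaximal_le hR _ _) _
    _ ≤ 2 * (5 ^ d * ∫⁻ x in {y | l < 2 * h y}, h x ∂volume.restrict (cube c (4 * R))) := by
        exact mul_le_mul_right (mul_le_mul_right (hset ▸ lintegral_indicator_le _ _) _) _
    _ = _ := by rw [mul_assoc]

lemma ofLp_preimage_closedBall_ae_eq_cube (c : Ed d) (hR : 0 ≤ R) :
    WithLp.ofLp ⁻¹' closedBall (WithLp.ofLp c) (R / 2) =ᵐ[volume] cube c R := by
  have hIcc : closedBall (WithLp.ofLp c) (R / 2) =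
      Icc (fun i => c i - R / 2) (fun i => c i + R / 2) := by
    rw [closedBall_pi _ (by positivity), ← pi_univ_Icc]
    simp only [Real.closedBall_eq_Icc]
  rw [hIcc, cube_eq_preimage_pi_Ioo]
  exact (PiLp.volume_preserving_ofLp (Fin d)).quasiMeasurePreserving.preimage_ae_eq
    Measure.univ_pi_Ioo_ae_eq_Icc.symm

lemma ae_tendsto_setLAverage_cube (hh : AEMeasurable h) (hfin : ∫⁻ x, h x ≠ ∞) :
    ∀ᵐ x, ∀ (z : ℕ → Ed d) (δ : ℕ → ℝ), Tendsto δ atTop (𝓝[>] 0) →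
      (∀ k, x ∈ cube (z k) (δ k)) →
      Tendsto (fun k => ⨍⁻ y in cube (z k) (δ k), h y ∂volume) atTop (𝓝 (h x)) := by
  have hmp := PiLp.volume_preserving_ofLp (Fin d)
  have hemb := (MeasurableEquiv.toLp 2 (Fin d → ℝ)).symm.measurableEmbedding
  have hh' : AEMeasurable (fun v : Fin d → ℝ => h (WithLp.toLp 2 v)) :=
    hh.comp_quasiMeasurePreserving
      (PiLp.volume_preserving_toLp (Fin d)).quasiMeasurePreserving
  have hfin' : ∫⁻ v : Fin d → ℝ, h (WithLp.toLp 2 v) ≠ ∞ := by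
    rwa [← hmp.lintegral_comp_emb hemb]
  have hleb := (IsUnifLocDoublingMeasure.vitaliFamily (volume : Measure (Fin d → ℝ))
    1).ae_tendsto_lintegral_div hh' hfin'
  filter_upwards [hmp.quasiMeasurePreserving.ae hleb] with x hx z δ hδ hmem
  have hδ_pos : ∀ᶠ k in atTop, 0 < δ k := (tendsto_nhdsWithin_iff.1 hδ).2
  have hradius : Tendsto (fun k => δ k / 2) atTop (𝓝[>] 0) := by
    refine tendsto_nhdsWithin_iff.2 ⟨?_, hδ_pos.mono fun k hk => half_pos hk⟩
    simpa using (tendsto_nhdsWithin_iff.1 hδ).1.div_const 2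
  have hmem_ball : ∀ᶠ k in atTop,
      WithLp.ofLp x ∈ closedBall (WithLp.ofLp (z k)) (1 * (δ k / 2)) := by
    filter_upwards [hδ_pos] with k hk
    rw [one_mul, mem_closedBall, dist_pi_le_iff (half_pos hk).le]
    exact fun i => (hmem k i).le
  refine (hx.comp (IsUnifLocDoublingMeasure.tendsto_closedBall_filterAt (μ := volume) _ _
    hradius hmem_ball)).congr' ?_
  filter_upwards [hδ_pos] with k hk
  rw [← setLAverage_congr (ofLp_preimage_closedBall_ae_eq_cube (z k) hk.le), setLAverage_eq,
    hmp.measure_preimage measurableSet_closedBall.nullMeasurableSet, Function.comp_apply,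
    ← hmp.setLIntegral_comp_preimage_emb hemb]

lemma tendsto_div_two_pow_nhdsGT_zero {a : ℝ} (ha : 0 < a) :
    Tendsto (fun k : ℕ => a / 2 ^ k) atTop (𝓝[>] 0) := by
  refine tendsto_nhdsWithin_iff.2 ⟨?_, .of_forall fun k => by simp only [mem_Ioi]; positivity⟩
  exact tendsto_const_nhds.div_atTop (tendsto_pow_atTop_atTop_of_one_lt one_lt_two)

lemma ae_le_dyadicMaximal (hR : 0 < R) (hh : AEMeasurable h (volume.restrict (cube c (4 * R))))
    (hfin : ∫⁻ x in cube c (4 * R), h x ≠ ∞) :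
    ∀ᵐ x ∂volume.restrict (cube c R), h x ≤ dyadicMaximal c R h x := by
  have hmeas := measurableSet_cube c (4 * R)
  have hleb := ae_tendsto_setLAverage_cube ((aemeasurable_indicator_iff hmeas).2 hh)
    (by rwa [lintegral_indicator hmeas])
  rw [ae_restrict_iff' (measurableSet_cube c R)]
  filter_upwards [hleb] with x hx hxQ
  have hlim := hx (fun k => dyadicCenter c R k (dyadicIndex c R k x)) (fun k => 4 * (R / 2 ^ k))
    (by simpa only [mul_div_assoc] using tendsto_div_two_pow_nhdsGT_zero (mul_pos four_pos hR))
    (fun k => mem_dyadicCubeAt hR k hxQ (by norm_num))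
  rw [indicator_of_mem (cube_subset_cube (fun i => by rw [sub_self, abs_zero]; linarith) hxQ)]
    at hlim
  exact le_of_tendsto' hlim fun k =>
    (setLAverage_mono (measurableSet_dyadicCube ..) fun y _ => indicator_le_self _ _ y).trans
      (setLAverage_le_dyadicMaximal c R h k x)

end MaximalFunction

section GoodLambda

/-- The local comparison on a pair `S₂ ⊆ S₄` for nonnegative functions: on `S₂` the function `u` is
dominated by a small part `D`, controlled in mean, and a part `V` with higher integrability `q`. -/
def HasSplitting {α : Type*} [MeasurableSpace α] (μ : Measure α) (S₂ S₄ : Set α)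
    (u F G : α → ℝ≥0∞) (ε K : ℝ≥0∞) (q : ℝ) : Prop :=
  ∃ D V : α → ℝ≥0∞, AEMeasurable D (μ.restrict S₂) ∧ AEMeasurable V (μ.restrict S₂) ∧
    (∀ y ∈ S₂, u y ≤ D y + V y) ∧
    ⨍⁻ y in S₄, D y ∂μ ≤ ε * ⨍⁻ y in S₄, u y ∂μ + K * ⨍⁻ y in S₄, F y ∂μ ∧
    ⨍⁻ y in S₂, V y ^ q ∂μ ≤ (K * (⨍⁻ y in S₄, u y ∂μ + ⨍⁻ y in S₄, G y ∂μ)) ^ q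

/-- The parameters of the good-`λ` argument: `N` is the jump of the level, `δ` the weight of `F`,
`ε` the admissible comparison error and `η` the resulting gain. The numerical factors come from
the weak-type constant `5 ^ d` and from ratios of volumes of dilated dyadic cubes. -/
structure IsGoodLambdaParam (d : ℕ) (q : ℝ) (K ε N δ η : ℝ≥0∞) : Prop where
  two_pow_le : 2 ^ d ≤ N
  ne_top : N ≠ ∞
  weight_ne_zero : δ ≠ 0
  weight_ne_top : δ ≠ ∞
  error_le : 2 * 5 ^ d * 8 ^ d * (ε + K * δ) ≤ η * N
  jump_le : 5 ^ d * 4 ^ d * (4 * K) ^ q ≤ η * N ^ q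

variable {d : ℕ} {c x : Ed d} {R q : ℝ} {k : ℕ} {m : Fin d → ℕ} {u F G D V h : Ed d → ℝ≥0∞}
  {ε K N δ η l a : ℝ≥0∞}

lemma setLAverage_dyadicCubeAt_succ_le (hR : 0 < R) (u : Ed d → ℝ≥0∞) (k : ℕ) (x : Ed d) :
    ⨍⁻ y in dyadicCubeAt c R (k + 1) x 4, u y ∂volume ≤
      2 ^ d * ⨍⁻ y in dyadicCubeAt c R k x 4, u y ∂volume :=
  setLAverage_le_mul_of_subset (dyadicCubeAt_subset_of_le hR.le (by norm_num) k.le_succ x)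
    (volume_dyadicCube_ne_zero hR four_pos) volume_dyadicCube_ne_top (volume_dyadicCube_succ _)

lemma exists_lt_setLAverage_of_lt_dyadicMaximal (hR : 0 < R) (hN : 2 ^ d ≤ N)
    (hu : ∀ j ≤ k, ⨍⁻ y in dyadicCubeAt c R j x 4, u y ∂volume ≤ l)
    (hx : N * l < dyadicMaximal c R u x) :
    ∃ j, k + 2 ≤ j ∧ N * l < ⨍⁻ y in dyadicCubeAt c R j x 4, u y ∂volume := by
  obtain ⟨j, hj⟩ := lt_dyadicMaximal_iff.1 hx
  have hN₁ : 1 ≤ N := (one_le_pow₀ one_le_two).trans hN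
  have hjk : ¬ j ≤ k := fun hjk => hj.not_ge ((hu j hjk).trans (le_mul_of_one_le_left' hN₁))
  have hjk' : j ≠ k + 1 := by
    rintro rfl
    exact hj.not_ge ((setLAverage_dyadicCubeAt_succ_le hR u k x).trans
      (mul_le_mul' hN (hu k le_rfl)))
  exact ⟨j, by omega, hj⟩

lemma setLAverage_le_dyadicMaximal_indicator {S : Set (Ed d)}
    (hS : dyadicCubeAt c R k x 4 ⊆ S) (h : Ed d → ℝ≥0∞) :
    ⨍⁻ y in dyadicCubeAt c R k x 4, h y ∂volume ≤ dyadicMaximal c R (S.indicator h) x :=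
  (setLAverage_mono (measurableSet_dyadicCube ..) fun _ hy =>
    (indicator_of_mem (hS hy) h).ge).trans (setLAverage_le_dyadicMaximal ..)

lemma mul_volume_lt_dyadicMaximal_indicator_le (hR : 0 < R) (h : Ed d → ℝ≥0∞) (S : Set (Ed d))
    (l : ℝ≥0∞) :
    l * volume ({x | l < dyadicMaximal c R (S.indicator h) x} ∩ cube c R) ≤
      5 ^ d * ∫⁻ x in S, h x :=
  (mul_volume_lt_dyadicMaximal_le hR _ l).trans <| mul_le_mul_right
    ((setLIntegral_le_lintegral _ _).trans (lintegral_indicator_le h S)) _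

lemma lt_dyadicMaximal_indicator_or (hR : 0 < R) (hq : 1 ≤ q) (hN : 2 ^ d ≤ N)
    (hD : AEMeasurable D (volume.restrict (dyadicCubeAt c R k x 2)))
    (hV : AEMeasurable V (volume.restrict (dyadicCubeAt c R k x 2)))
    (hDV : ∀ y ∈ dyadicCubeAt c R k x 2, u y ≤ D y + V y)
    (hu : ∀ j ≤ k, ⨍⁻ y in dyadicCubeAt c R j x 4, u y ∂volume ≤ l)
    (hx : N * l < dyadicMaximal c R u x) (ha : a + a = N * l) :
    a < dyadicMaximal c R ((dyadicCubeAt c R k x 2).indicator D) x ∨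
      a ^ q < dyadicMaximal c R ((dyadicCubeAt c R k x 2).indicator fun y => V y ^ q) x := by
  obtain ⟨j, hkj, hj⟩ := exists_lt_setLAverage_of_lt_dyadicMaximal hR hN hu hx
  have hsub : dyadicCubeAt c R j x 4 ⊆ dyadicCubeAt c R k x 2 :=
    dyadicCubeAt_four_subset_two hR.le hkj x
  have hsum : a + a < ⨍⁻ y in dyadicCubeAt c R j x 4, D y ∂volume +
      ⨍⁻ y in dyadicCubeAt c R j x 4, V y ∂volume := by
    rw [ha, ← setLAverage_add (hD.mono_measure (Measure.restrict_mono_set _ hsub))]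
    exact hj.trans_le (setLAverage_mono (measurableSet_dyadicCube ..) fun y hy => hDV y (hsub hy))
  rcases lt_or_lt_of_add_lt_add hsum with hlt | hlt
  · exact .inl (hlt.trans_le (setLAverage_le_dyadicMaximal_indicator hsub D))
  · refine .inr ?_
    calc a ^ q < (⨍⁻ y in dyadicCubeAt c R j x 4, V y ∂volume) ^ q :=
          ENNReal.rpow_lt_rpow hlt (by linarith)
      _ ≤ ⨍⁻ y in dyadicCubeAt c R j x 4, V y ^ q ∂volume :=
          rpow_setLAverage_le hq (volume_dyadicCube_ne_zero hR four_pos) volume_dyadicCube_ne_top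
            (hV.mono_measure (Measure.restrict_mono_set _ hsub))
      _ ≤ _ := setLAverage_le_dyadicMaximal_indicator hsub _

lemma volume_dyadicCube_eq_mul_succ_one {b : ℝ} (hb : 0 ≤ b) (m' : Fin d → ℕ) :
    volume (dyadicCube c R k m b) =
      ENNReal.ofReal (2 * b) ^ d * volume (dyadicCube c R (k + 1) m' 1) := by
  rw [volume_dyadicCube_succ m', ← mul_one b, volume_dyadicCube_mul hb m',
    ENNReal.ofReal_mul zero_le_two, ENNReal.ofReal_ofNat, mul_one, mul_pow, mul_assoc]

lemma volume_lt_dyadicMaximal_indicator_le {b : ℝ} {S : Set (Ed d)} (hR : 0 < R) (hb : 0 ≤ b)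
    (hS : S ⊆ dyadicCube c R k m b) (ha₀ : a ≠ 0) (ha : a ≠ ∞)
    (hη : 5 ^ d * (ENNReal.ofReal (2 * b) ^ d * ⨍⁻ y in dyadicCube c R k m b, h y ∂volume) ≤ η * a)
    (m' : Fin d → ℕ) :
    volume ({x | a < dyadicMaximal c R (S.indicator h) x} ∩ cube c R) ≤
      η * volume (dyadicCube c R (k + 1) m' 1) := by
  rw [← ENNReal.mul_le_mul_iff_right ha₀ ha]
  calc a * volume ({x | a < dyadicMaximal c R (S.indicator h) x} ∩ cube c R)
      ≤ 5 ^ d * ∫⁻ y in S, h y := mul_volume_lt_dyadicMaximal_indicator_le hR h S a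
    _ ≤ 5 ^ d * ∫⁻ y in dyadicCube c R k m b, h y := by gcongr
    _ = 5 ^ d * (ENNReal.ofReal (2 * b) ^ d * ⨍⁻ y in dyadicCube c R k m b, h y ∂volume) *
          volume (dyadicCube c R (k + 1) m' 1) := by
        rw [← measure_mul_setLAverage _ volume_dyadicCube_ne_top,
          volume_dyadicCube_eq_mul_succ_one hb m']
        ring
    _ ≤ η * a * volume (dyadicCube c R (k + 1) m' 1) := by gcongr
    _ = a * (η * volume (dyadicCube c R (k + 1) m' 1)) := by ring

namespace IsGoodLambdaParam

lemma one_le (hpar : IsGoodLambdaParam d q K ε N δ η) : 1 ≤ N :=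
  (one_le_pow₀ one_le_two).trans hpar.two_pow_le

lemma error_mul_le (hpar : IsGoodLambdaParam d q K ε N δ η) (l : ℝ≥0∞) :
    5 ^ d * (8 ^ d * ((ε + K * δ) * l)) ≤ η * (N * (l / 2)) :=
  calc 5 ^ d * (8 ^ d * ((ε + K * δ) * l))
      = 2 * 5 ^ d * 8 ^ d * (ε + K * δ) * (l / 2) := by
        nth_rw 1 [← ENNReal.add_halves l]
        ring
    _ ≤ η * N * (l / 2) := mul_le_mul_left hpar.error_le _
    _ = η * (N * (l / 2)) := mul_assoc ..

lemma jump_rpow_le (hpar : IsGoodLambdaParam d q K ε N δ η) (hq : 0 ≤ q) (l : ℝ≥0∞) :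
    5 ^ d * (4 ^ d * (K * (l + l)) ^ q) ≤ η * (N * (l / 2)) ^ q := by
  have hl : K * (l + l) = 4 * K * (l / 2) := by
    nth_rw 1 2 [← ENNReal.add_halves l]
    ring
  rw [hl, ENNReal.mul_rpow_of_nonneg (4 * K) _ hq, ENNReal.mul_rpow_of_nonneg N _ hq,
    ← mul_assoc, ← mul_assoc, ← mul_assoc]
  exact mul_le_mul_left hpar.jump_le _

end IsGoodLambdaParam

lemma volume_lt_dyadicMaximal_inter_dyadicIndex_eq_le (hR : 0 < R) (hq : 1 ≤ q)
    (hpar : IsGoodLambdaParam d q K ε N δ η) (hl : l ≠ 0) (hl_top : l ≠ ∞)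
    (hsplit : HasSplitting volume (dyadicCubeAt c R k x 2) (dyadicCubeAt c R k x 4) u F G ε K q)
    (hu : ∀ j ≤ k, ⨍⁻ y in dyadicCubeAt c R j x 4, u y ∂volume ≤ l)
    (hF : ⨍⁻ y in dyadicCubeAt c R k x 4, F y ∂volume ≤ δ * l)
    (hG : ⨍⁻ y in dyadicCubeAt c R k x 4, G y ∂volume ≤ l) :
    volume ({z | N * l < dyadicMaximal c R u z ∧
        dyadicIndex c R (k + 1) z = dyadicIndex c R (k + 1) x} ∩ cube c R) ≤
      (η + η) * volume (dyadicCubeAt c R (k + 1) x 1) := by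
  obtain ⟨D, V, hD, hV, hDV, hD_avg, hV_avg⟩ := hsplit
  have ha₀ : N * (l / 2) ≠ 0 := mul_ne_zero (one_pos.trans_le hpar.one_le).ne' (by simpa)
  have ha : N * (l / 2) ≠ ∞ := ENNReal.mul_ne_top hpar.ne_top (by finiteness)
  have hhalf : N * (l / 2) + N * (l / 2) = N * l := by rw [← mul_add, ENNReal.add_halves]
  have hD_le : 5 ^ d * (ENNReal.ofReal (2 * 4) ^ d *
      ⨍⁻ y in dyadicCubeAt c R k x 4, D y ∂volume) ≤ η * (N * (l / 2)) := by
    refine le_trans ?_ (hpar.error_mul_le l)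
    rw [show (2 * 4 : ℝ) = 8 by norm_num, ENNReal.ofReal_ofNat, add_mul, mul_assoc K]
    gcongr
    exact hD_avg.trans (by gcongr; exact hu k le_rfl)
  have hV_le : 5 ^ d * (ENNReal.ofReal (2 * 2) ^ d *
      ⨍⁻ y in dyadicCubeAt c R k x 2, V y ^ q ∂volume) ≤ η * (N * (l / 2)) ^ q := by
    refine le_trans ?_ (hpar.jump_rpow_le (by linarith) l)
    rw [show (2 * 2 : ℝ) = 4 by norm_num, ENNReal.ofReal_ofNat]
    gcongr
    exact hV_avg.trans (by gcongr; exact hu k le_rfl)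
  calc volume ({z | N * l < dyadicMaximal c R u z ∧
        dyadicIndex c R (k + 1) z = dyadicIndex c R (k + 1) x} ∩ cube c R)
      ≤ volume ({z | N * (l / 2) <
            dyadicMaximal c R ((dyadicCubeAt c R k x 2).indicator D) z} ∩ cube c R ∪
          {z | (N * (l / 2)) ^ q <
            dyadicMaximal c R ((dyadicCubeAt c R k x 2).indicator fun y => V y ^ q) z} ∩
              cube c R) := by
        refine measure_mono ?_
        rintro z ⟨⟨hz, hzx⟩, hzQ⟩
        rw [← union_inter_distrib_right]
        refine ⟨?_, hzQ⟩
        rw [← dyadicCubeAt_congr k.le_succ hzx] at hD hV hDV ⊢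
        exact lt_dyadicMaximal_indicator_or hR hq hpar.two_pow_le hD hV hDV
          (fun j hj => dyadicCubeAt_congr (hj.trans k.le_succ) hzx 4 ▸ hu j hj) hz hhalf
    _ ≤ η * volume (dyadicCubeAt c R (k + 1) x 1) + η * volume (dyadicCubeAt c R (k + 1) x 1) :=
        (measure_union_le _ _).trans <| add_le_add
          (volume_lt_dyadicMaximal_indicator_le hR zero_le_four
            (dyadicCube_subset_of_le hR.le (by norm_num)) ha₀ ha hD_le _)
          (volume_lt_dyadicMaximal_indicator_le hR zero_le_two subset_rfl
            (ENNReal.rpow_pos (pos_iff_ne_zero.2 ha₀) ha).ne'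
            (ENNReal.rpow_ne_top_of_nonneg (by linarith) ha) hV_le _)
    _ = (η + η) * volume (dyadicCubeAt c R (k + 1) x 1) := (add_mul ..).symm

/-- The points of the cube with center `c` and sidelength `R` for which `k` is the first generation
whose average of `u` exceeds `l`, and whose dyadic subcube of that generation has index `m`. -/
def stoppingCell (c : Ed d) (R : ℝ) (u : Ed d → ℝ≥0∞) (l : ℝ≥0∞) (k : ℕ) (m : Fin d → ℕ) :
    Set (Ed d) :=
  {x | dyadicIndex c R k x = m ∧ l < ⨍⁻ y in dyadicCubeAt c R k x 4, u y ∂volume ∧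
    ∀ j < k, ⨍⁻ y in dyadicCubeAt c R j x 4, u y ∂volume ≤ l} ∩ cube c R

lemma measurableSet_stoppingCell (c : Ed d) (R : ℝ) (u : Ed d → ℝ≥0∞) (l : ℝ≥0∞) (k : ℕ)
    (m : Fin d → ℕ) : MeasurableSet (stoppingCell c R u l k m) := by
  have hlevel : MeasurableSet {x | ∀ j < k, ⨍⁻ y in dyadicCubeAt c R j x 4, u y ∂volume ≤ l} := by
    simp only [ofPred_forall]
    exact .iInter fun j => .iInter fun _ =>
      measurableSet_le (measurable_setLAverage_dyadicCubeAt c R u j) measurable_const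
  exact ((measurable_dyadicIndex c R k (measurableSet_singleton m)).inter
    ((measurableSet_lt measurable_const (measurable_setLAverage_dyadicCubeAt c R u k)).inter
      hlevel)).inter (measurableSet_cube c R)

lemma pairwise_disjoint_stoppingCell (c : Ed d) (R : ℝ) (u : Ed d → ℝ≥0∞) (l : ℝ≥0∞) :
    Pairwise (Function.onFun Disjoint
      fun b : ℕ × (Fin d → ℕ) => stoppingCell c R u l b.1 b.2) := by
  rintro ⟨k, m⟩ ⟨k', m'⟩ hne
  dsimp only [Function.onFun]
  refine disjoint_left.2 ?_
  rintro x ⟨⟨rfl, hk, hlt⟩, _⟩ ⟨⟨rfl, hk', hlt'⟩, _⟩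
  rcases lt_trichotomy k k' with h | rfl | h
  · exact hk.not_ge (hlt' k h)
  · exact hne rfl
  · exact hk'.not_ge (hlt k' h)

lemma iUnion_stoppingCell (c : Ed d) (R : ℝ) (u : Ed d → ℝ≥0∞) (l : ℝ≥0∞) :
    ⋃ b : ℕ × (Fin d → ℕ), stoppingCell c R u l b.1 b.2 =
      {x | l < dyadicMaximal c R u x} ∩ cube c R := by
  ext x
  simp only [mem_iUnion, Prod.exists]
  constructor
  · rintro ⟨k, m, ⟨-, hk, -⟩, hxQ⟩
    exact ⟨lt_dyadicMaximal_iff.2 ⟨k, hk⟩, hxQ⟩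
  · rintro ⟨hx, hxQ⟩
    classical
    have hex := lt_dyadicMaximal_iff.1 hx
    exact ⟨Nat.find hex, _, ⟨rfl, Nat.find_spec hex, fun j hj => not_lt.1 (Nat.find_min hex hj)⟩,
      hxQ⟩

lemma dyadicCubeAt_one_subset_stoppingCell (hR : 0 < R) (hx : x ∈ stoppingCell c R u l k m) :
    dyadicCubeAt c R k x 1 ⊆ stoppingCell c R u l k m := by
  obtain ⟨⟨rfl, hk, hlt⟩, hxQ⟩ := hx
  intro z hz
  have hzx := dyadicIndex_eq_of_mem_dyadicCube_one hR hz
  refine ⟨⟨hzx, ?_, fun j hj => ?_⟩, mem_cube_of_mem_dyadicCube_one hR (dyadicIndex_lt hR k hxQ) hz⟩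
  · rwa [dyadicCubeAt_congr le_rfl hzx]
  · rw [dyadicCubeAt_congr hj.le hzx]
    exact hlt j hj

/-- Where this function is at most `λ`, the averages of `F`, of `G` and of `u` over the whole cube
do not interfere with the good-`λ` inequality at level `λ`. -/
def goodLambdaControl (c : Ed d) (R : ℝ) (u F G : Ed d → ℝ≥0∞) (δ : ℝ≥0∞) (x : Ed d) : ℝ≥0∞ :=
  δ⁻¹ * dyadicMaximal c R F x + dyadicMaximal c R G x + ⨍⁻ y in cube c (4 * R), u y ∂volume

lemma measurable_goodLambdaControl (c : Ed d) (R : ℝ) (u F G : Ed d → ℝ≥0∞) (δ : ℝ≥0∞) :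
    Measurable (goodLambdaControl c R u F G δ) :=
  (((measurable_dyadicMaximal c R F).const_mul _).add
    (measurable_dyadicMaximal c R G)).add_const _

lemma setLAverage_left_le_of_goodLambdaControl_le (hδ₀ : δ ≠ 0) (hδ : δ ≠ ∞)
    (h : goodLambdaControl c R u F G δ x ≤ l) (k : ℕ) :
    ⨍⁻ y in dyadicCubeAt c R k x 4, F y ∂volume ≤ δ * l := by
  rw [← ENNReal.inv_mul_le_iff hδ₀ hδ]
  exact (mul_le_mul_right (setLAverage_le_dyadicMaximal c R F k x) _).trans
    ((le_self_add.trans le_self_add).trans h)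

lemma setLAverage_right_le_of_goodLambdaControl_le (h : goodLambdaControl c R u F G δ x ≤ l)
    (k : ℕ) : ⨍⁻ y in dyadicCubeAt c R k x 4, G y ∂volume ≤ l :=
  (setLAverage_le_dyadicMaximal c R G k x).trans ((le_add_self.trans le_self_add).trans h)

lemma volume_inter_stoppingCell_le (hR : 0 < R) (hq : 1 ≤ q)
    (hpar : IsGoodLambdaParam d q K ε N δ η) (hl : l ≠ 0) (hl_top : l ≠ ∞)
    (hsplit : ∀ x ∈ cube c R, ∀ k,
      HasSplitting volume (dyadicCubeAt c R k x 2) (dyadicCubeAt c R k x 4) u F G ε K q)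
    (k : ℕ) (m : Fin d → ℕ) :
    volume ({x | N * l < dyadicMaximal c R u x ∧ goodLambdaControl c R u F G δ x ≤ l} ∩
      stoppingCell c R u l k m) ≤ (η + η) * volume (stoppingCell c R u l k m) := by
  rcases eq_empty_or_nonempty ({x | N * l < dyadicMaximal c R u x ∧
    goodLambdaControl c R u F G δ x ≤ l} ∩ stoppingCell c R u l k m) with
    hempty | ⟨x, ⟨-, hctl⟩, hx⟩
  · simp [hempty]
  have hcell := dyadicCubeAt_one_subset_stoppingCell hR hx
  obtain ⟨⟨rfl, hk, hlt⟩, hxQ⟩ := hx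
  rcases k with _ | k
  · rw [dyadicCubeAt_zero hR hxQ] at hk
    exact absurd (le_add_self.trans hctl) hk.not_ge
  calc volume ({x | N * l < dyadicMaximal c R u x ∧ goodLambdaControl c R u F G δ x ≤ l} ∩
        stoppingCell c R u l (k + 1) (dyadicIndex c R (k + 1) x))
      ≤ volume ({z | N * l < dyadicMaximal c R u z ∧
          dyadicIndex c R (k + 1) z = dyadicIndex c R (k + 1) x} ∩ cube c R) :=
        measure_mono fun z ⟨⟨hz, _⟩, ⟨hzx, _⟩, hzQ⟩ => ⟨⟨hz, hzx⟩, hzQ⟩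
    _ ≤ (η + η) * volume (dyadicCubeAt c R (k + 1) x 1) :=
        volume_lt_dyadicMaximal_inter_dyadicIndex_eq_le hR hq hpar hl hl_top (hsplit x hxQ k)
          (fun j hj => hlt j (Nat.lt_succ_of_le hj))
          (setLAverage_left_le_of_goodLambdaControl_le hpar.weight_ne_zero hpar.weight_ne_top
            hctl k)
          (setLAverage_right_le_of_goodLambdaControl_le hctl k)
    _ ≤ _ := by gcongr

lemma meas_le_mul_of_subset_iUnion {α ι : Type*} [MeasurableSpace α] [Countable ι]
    {μ : Measure α} {E : Set α} {B : ι → Set α} (hE : E ⊆ ⋃ i, B i)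
    (hB : ∀ i, MeasurableSet (B i)) (hdisj : Pairwise (Function.onFun Disjoint B))
    (h : ∀ i, μ (E ∩ B i) ≤ a * μ (B i)) : μ E ≤ a * μ (⋃ i, B i) :=
  calc μ E = μ (⋃ i, E ∩ B i) := by rw [← inter_iUnion, inter_eq_left.2 hE]
    _ ≤ ∑' i, μ (E ∩ B i) := measure_iUnion_le _
    _ ≤ ∑' i, a * μ (B i) := ENNReal.tsum_le_tsum h
    _ = a * μ (⋃ i, B i) := by rw [ENNReal.tsum_mul_left, measure_iUnion hdisj hB]

lemma volume_lt_dyadicMaximal_goodLambda (hR : 0 < R) (hq : 1 ≤ q)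
    (hpar : IsGoodLambdaParam d q K ε N δ η) (hl : l ≠ 0) (hl_top : l ≠ ∞)
    (hsplit : ∀ x ∈ cube c R, ∀ k,
      HasSplitting volume (dyadicCubeAt c R k x 2) (dyadicCubeAt c R k x 4) u F G ε K q) :
    volume.restrict (cube c R) {x | N * l < dyadicMaximal c R u x} ≤
      (η + η) * volume.restrict (cube c R) {x | l < dyadicMaximal c R u x} +
        volume.restrict (cube c R) {x | l < goodLambdaControl c R u F G δ x} := by
  simp only [Measure.restrict_apply' (measurableSet_cube c R)]
  let E := {x | N * l < dyadicMaximal c R u x ∧ goodLambdaControl c R u F G δ x ≤ l}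
  have hE : E ∩ cube c R ⊆
      ⋃ b : ℕ × (Fin d → ℕ), stoppingCell c R u l b.1 b.2 := by
    rw [iUnion_stoppingCell]
    exact fun x ⟨hx, hxQ⟩ => ⟨(le_mul_of_one_le_left' hpar.one_le).trans_lt hx.1, hxQ⟩
  have hcover : {x | N * l < dyadicMaximal c R u x} ∩ cube c R ⊆
      E ∩ cube c R ∪ {x | l < goodLambdaControl c R u F G δ x} ∩ cube c R :=
    fun x ⟨hx, hxQ⟩ => (le_or_gt (goodLambdaControl c R u F G δ x) l).imp
      (fun hctl => ⟨⟨hx, hctl⟩, hxQ⟩) fun hctl => ⟨hctl, hxQ⟩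
  refine (measure_mono hcover).trans <| (measure_union_le _ _).trans <| add_le_add_left ?_ _
  rw [← iUnion_stoppingCell]
  exact meas_le_mul_of_subset_iUnion hE (fun b => measurableSet_stoppingCell ..)
    (pairwise_disjoint_stoppingCell c R u l) fun b =>
      (measure_mono (inter_subset_inter_left _ inter_subset_left)).trans
        (volume_inter_stoppingCell_le hR hq hpar hl hl_top hsplit b.1 b.2)

end GoodLambda

section MaximalEstimate

lemma exists_le_and_le_rpow {A B : ℝ≥0∞} (hA : A ≠ ∞) (hB : B ≠ ∞) {s : ℝ} (hs : 0 < s) :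
    ∃ N, N ≠ ∞ ∧ A ≤ N ∧ B ≤ N ^ s := by
  have hroot : B ^ s⁻¹ ≠ ∞ := ENNReal.rpow_ne_top_of_nonneg (by positivity) hB
  refine ⟨max A (B ^ s⁻¹), max_ne_top hA hroot, le_max_left _ _, ?_⟩
  calc B = (B ^ s⁻¹) ^ s := (ENNReal.rpow_inv_rpow hs.ne' B).symm
    _ ≤ max A (B ^ s⁻¹) ^ s := by gcongr; exact le_max_right _ _

lemma exists_mul_add_mul_le {a B K : ℝ≥0∞} (ha₀ : a ≠ 0) (ha : a ≠ ∞) (hB₀ : B ≠ 0) (hB : B ≠ ∞)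
    (hK : K ≠ ∞) :
    ∃ ε δ : ℝ≥0∞, ε ≠ 0 ∧ ε ≠ ∞ ∧ δ ≠ 0 ∧ δ ≠ ∞ ∧ B * (ε + K * δ) ≤ a := by
  have hε₀ : a / 2 / B ≠ 0 := ENNReal.div_ne_zero.2 ⟨ENNReal.div_ne_zero.2 ⟨ha₀, by simp⟩, hB⟩
  have hε : a / 2 / B ≠ ∞ := by finiteness
  refine ⟨a / 2 / B, a / 2 / B / (K + 1), hε₀, hε, ENNReal.div_ne_zero.2 ⟨hε₀, by simpa⟩,
    ENNReal.div_ne_top hε (by simp), ?_⟩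
  have hKδ : K * (a / 2 / B / (K + 1)) ≤ a / 2 / B :=
    calc K * (a / 2 / B / (K + 1)) ≤ (K + 1) * (a / 2 / B / (K + 1)) := by
          gcongr
          exact le_self_add
      _ = a / 2 / B := ENNReal.mul_div_cancel (by simp) (by simpa)
  calc B * (a / 2 / B + K * (a / 2 / B / (K + 1))) ≤ B * (a / 2 / B + a / 2 / B) := by gcongr
    _ = a := by rw [mul_add, ENNReal.mul_div_cancel hB₀ hB, ENNReal.add_halves]

lemma exists_isGoodLambdaParam (d : ℕ) {p q : ℝ} {K : ℝ≥0∞} (hp : 0 ≤ p) (hpq : p < q)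
    (hK : K ≠ ∞) :
    ∃ ε N δ η, ε ≠ 0 ∧ ε ≠ ∞ ∧ IsGoodLambdaParam d q K ε N δ η ∧ (η + η) * N ^ p ≤ 1 / 2 := by
  have hA : 4 * (5 ^ d * 4 ^ d * (4 * K) ^ q) ≠ ∞ := by
    have : (4 * K) ^ q ≠ ∞ := ENNReal.rpow_ne_top_of_nonneg (by linarith) (by finiteness)
    finiteness
  obtain ⟨N, hN_top, hN, hNA⟩ :=
    exists_le_and_le_rpow (A := 2 ^ d) (by finiteness) hA (sub_pos.2 hpq)
  have hN₀ : N ≠ 0 := (one_pos.trans_le ((one_le_pow₀ one_le_two).trans hN)).ne'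
  have hNp₀ : N ^ p ≠ 0 := (ENNReal.rpow_pos (pos_iff_ne_zero.2 hN₀) hN_top).ne'
  have hNp : N ^ p ≠ ∞ := ENNReal.rpow_ne_top_of_nonneg hp hN_top
  obtain ⟨ε, δ, hε₀, hε, hδ₀, hδ, hεδ⟩ := exists_mul_add_mul_le (a := (N ^ p)⁻¹ / 4 * N)
    (B := 2 * 5 ^ d * 8 ^ d) (K := K) (mul_ne_zero (by simp [hNp]) hN₀) (by finiteness)
    (by simp) (by finiteness) hK
  refine ⟨ε, N, δ, (N ^ p)⁻¹ / 4, hε₀, hε, ⟨hN, hN_top, hδ₀, hδ, hεδ, ?_⟩, ?_⟩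
  · have hgain : (N ^ p)⁻¹ / 4 * N ^ q = N ^ (q - p) / 4 := by
      rw [ENNReal.rpow_sub _ _ hN₀ hN_top]
      simp only [div_eq_mul_inv]
      ring
    rw [hgain, ENNReal.le_div_iff_mul_le (by simp) (by simp), mul_comm]
    exact hNA
  · have hquarter : (4⁻¹ : ℝ≥0∞) + 4⁻¹ = 2⁻¹ := by
      rw [← two_mul, show (4 : ℝ≥0∞) = 2 * 2 by norm_num,
        ENNReal.mul_inv (by simp) (by simp), ENNReal.mul_inv_cancel_left (by simp) (by simp)]
    rw [div_eq_mul_inv, ← mul_add, hquarter, mul_right_comm, ENNReal.inv_mul_cancel hNp₀ hNp,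
      one_div, one_mul]

variable {d : ℕ} {c : Ed d} {R p q : ℝ} {u F G : Ed d → ℝ≥0∞} {ε K N δ η : ℝ≥0∞}

lemma add_rpow_le_mul (a b : ℝ≥0∞) (hp : 0 ≤ p) : (a + b) ^ p ≤ 2 ^ p * (a ^ p + b ^ p) := by
  calc (a + b) ^ p ≤ (2 * max a b) ^ p := by
        gcongr
        rw [two_mul]
        exact add_le_add (le_max_left a b) (le_max_right a b)
    _ = 2 ^ p * max (a ^ p) (b ^ p) := by
        rw [ENNReal.mul_rpow_of_nonneg _ _ hp, (ENNReal.monotone_rpow_of_nonneg hp).map_max]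
    _ ≤ 2 ^ p * (a ^ p + b ^ p) := by
        gcongr
        exact max_le le_self_add le_add_self

lemma add_add_rpow_le_mul (a b e : ℝ≥0∞) (hp : 0 ≤ p) :
    (a + b + e) ^ p ≤ 4 ^ p * (a ^ p + b ^ p + e ^ p) := by
  have h4 : (4 : ℝ≥0∞) ^ p = 2 ^ p * 2 ^ p := by
    rw [← ENNReal.mul_rpow_of_nonneg _ _ hp]
    norm_num
  calc (a + b + e) ^ p ≤ 2 ^ p * ((a + b) ^ p + e ^ p) := add_rpow_le_mul _ _ hp
    _ ≤ 2 ^ p * (2 ^ p * (a ^ p + b ^ p) + 2 ^ p * e ^ p) := by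
        gcongr
        · exact add_rpow_le_mul _ _ hp
        · exact le_mul_of_one_le_left' (by simpa using ENNReal.rpow_le_rpow one_le_two hp)
    _ = 4 ^ p * (a ^ p + b ^ p + e ^ p) := by rw [← mul_add, ← mul_assoc, h4]

lemma rpow_le_of_le_mul_add_add {r s : ℝ} {X A B W C₁ : ℝ≥0∞} (hr : 0 < r) (hs : 0 < s)
    (h : X ≤ C₁ * (A + B + W ^ (s / r))) :
    X ^ (1 / s) ≤ (4 * C₁) ^ (1 / s) * (A ^ (1 / s) + B ^ (1 / s) + W ^ (1 / r)) := by
  have hs' : 0 ≤ 1 / s := by positivity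
  calc X ^ (1 / s) ≤ (C₁ * (A + B + W ^ (s / r))) ^ (1 / s) := by gcongr
    _ = C₁ ^ (1 / s) * (A + B + W ^ (s / r)) ^ (1 / s) := ENNReal.mul_rpow_of_nonneg _ _ hs'
    _ ≤ C₁ ^ (1 / s) * (4 ^ (1 / s) * (A ^ (1 / s) + B ^ (1 / s) + (W ^ (s / r)) ^ (1 / s))) := by
        gcongr
        exact add_add_rpow_le_mul _ _ _ hs'
    _ = (4 * C₁) ^ (1 / s) * (A ^ (1 / s) + B ^ (1 / s) + W ^ (1 / r)) := by
        rw [← ENNReal.rpow_mul, ENNReal.mul_rpow_of_nonneg _ _ hs', ← mul_assoc,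
          mul_comm (C₁ ^ _), show s / r * (1 / s) = 1 / r by field_simp]

/-- The constant in the bound of the `L^p` norm of `goodLambdaControl`. -/
def controlConst (d : ℕ) (p : ℝ) (δ : ℝ≥0∞) : ℝ≥0∞ :=
  4 ^ p * (δ⁻¹ ^ p * maximalConst d p + maximalConst d p + 1)

lemma controlConst_ne_top (d : ℕ) (hp : 1 < p) (hδ : δ ≠ 0) : controlConst d p δ ≠ ∞ := by
  have h4 : (4 : ℝ≥0∞) ^ p ≠ ∞ := ENNReal.rpow_ne_top_of_nonneg (by linarith) (by simp)
  have hδp : δ⁻¹ ^ p ≠ ∞ := ENNReal.rpow_ne_top_of_nonneg (by linarith) (by simpa)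
  have := maximalConst_ne_top d hp
  unfold controlConst
  finiteness

lemma setLIntegral_goodLambdaControl_rpow_le (hp : 1 < p) (hR : 0 < R) (hδ : δ ≠ 0)
    (hF : AEMeasurable F (volume.restrict (cube c (4 * R))))
    (hG : AEMeasurable G (volume.restrict (cube c (4 * R)))) :
    ∫⁻ x in cube c R, goodLambdaControl c R u F G δ x ^ p ≤
      controlConst d p δ * ((∫⁻ x in cube c (4 * R), F x ^ p) +
        (∫⁻ x in cube c (4 * R), G x ^ p) +
        (⨍⁻ y in cube c (4 * R), u y ∂volume) ^ p * volume (cube c R)) := by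
  have hp₀ : 0 ≤ p := by linarith
  have h4 : (4 : ℝ≥0∞) ^ p ≠ ∞ := ENNReal.rpow_ne_top_of_nonneg hp₀ (by simp)
  have hδp : δ⁻¹ ^ p ≠ ∞ := ENNReal.rpow_ne_top_of_nonneg hp₀ (by simpa)
  set A := ⨍⁻ y in cube c (4 * R), u y ∂volume
  set M := maximalConst d p
  calc ∫⁻ x in cube c R, goodLambdaControl c R u F G δ x ^ p
      ≤ ∫⁻ x in cube c R, 4 ^ p * (δ⁻¹ ^ p * dyadicMaximal c R F x ^ p +
          dyadicMaximal c R G x ^ p + A ^ p) := by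
        refine lintegral_mono fun x => (add_add_rpow_le_mul _ _ _ hp₀).trans_eq ?_
        rw [ENNReal.mul_rpow_of_nonneg _ _ hp₀]
    _ = 4 ^ p * (δ⁻¹ ^ p * (∫⁻ x in cube c R, dyadicMaximal c R F x ^ p) +
          (∫⁻ x in cube c R, dyadicMaximal c R G x ^ p) + A ^ p * volume (cube c R)) := by
        rw [lintegral_const_mul' _ _ h4, lintegral_add_right _ measurable_const,
          lintegral_add_right _ ((measurable_dyadicMaximal c R G).pow_const p),
          lintegral_const_mul' _ _ hδp, setLIntegral_const]
    _ ≤ 4 ^ p * (δ⁻¹ ^ p * (M * ∫⁻ x in cube c (4 * R), F x ^ p) +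
          M * (∫⁻ x in cube c (4 * R), G x ^ p) + A ^ p * volume (cube c R)) := by
        gcongr
        · exact setLIntegral_dyadicMaximal_rpow_le hp hR hF
        · exact setLIntegral_dyadicMaximal_rpow_le hp hR hG
    _ ≤ 4 ^ p * ((δ⁻¹ ^ p * M + M + 1) * (∫⁻ x in cube c (4 * R), F x ^ p) +
          (δ⁻¹ ^ p * M + M + 1) * (∫⁻ x in cube c (4 * R), G x ^ p) +
          (δ⁻¹ ^ p * M + M + 1) * (A ^ p * volume (cube c R))) := by
        rw [← mul_assoc (δ⁻¹ ^ p)]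
        refine mul_le_mul_right (add_le_add (add_le_add ?_ ?_) ?_) _
        · exact mul_le_mul_left (le_self_add.trans le_self_add) _
        · exact mul_le_mul_left (le_add_self.trans le_self_add) _
        · exact le_mul_of_one_le_left' le_add_self
    _ = _ := by rw [← mul_add, ← mul_add, ← mul_assoc, controlConst]

lemma setLIntegral_dyadicMaximal_rpow_le_of_hasSplitting (hp : 1 < p) (hq : 1 ≤ q) (hR : 0 < R)
    (hpar : IsGoodLambdaParam d q K ε N δ η) (hη : (η + η) * N ^ p ≤ 1 / 2)
    (hF : AEMeasurable F (volume.restrict (cube c (4 * R))))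
    (hG : AEMeasurable G (volume.restrict (cube c (4 * R))))
    (hsplit : ∀ x ∈ cube c R, ∀ k,
      HasSplitting volume (dyadicCubeAt c R k x 2) (dyadicCubeAt c R k x 4) u F G ε K q) :
    ∫⁻ x in cube c R, dyadicMaximal c R u x ^ p ≤
      2 * N ^ p * controlConst d p δ * ((∫⁻ x in cube c (4 * R), F x ^ p) +
        (∫⁻ x in cube c (4 * R), G x ^ p) +
        (⨍⁻ y in cube c (4 * R), u y ∂volume) ^ p * volume (cube c R)) := by
  have : IsFiniteMeasure (volume.restrict (cube c R)) :=
    isFiniteMeasure_restrict.2 (volume_cube_ne_top c R)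
  rw [mul_assoc]
  exact (lintegral_rpow_le_of_goodLambda (by linarith) hpar.one_le hpar.ne_top
    (measurable_dyadicMaximal c R u).aemeasurable
    (measurable_goodLambdaControl c R u F G δ).aemeasurable hη fun l hl hl_top =>
      volume_lt_dyadicMaximal_goodLambda hR hq hpar hl hl_top hsplit).trans
    (mul_le_mul_right
      (setLIntegral_goodLambdaControl_rpow_le hp hR hpar.weight_ne_zero hF hG) _)

lemma volume_cube_four_mul (c : Ed d) (R : ℝ) :
    volume (cube c (4 * R)) = 4 ^ d * volume (cube c R) := by
  rw [volume_cube, volume_cube, ENNReal.ofReal_mul zero_le_four, mul_pow, ENNReal.ofReal_ofNat]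

lemma setLIntegral_cube_four_mul_eq (c : Ed d) (R : ℝ) (h : Ed d → ℝ≥0∞) :
    ∫⁻ x in cube c (4 * R), h x =
      4 ^ d * (⨍⁻ x in cube c (4 * R), h x ∂volume) * volume (cube c R) := by
  rw [← measure_mul_setLAverage _ (volume_cube_ne_top c (4 * R)), volume_cube_four_mul]
  ring

theorem exists_setLAverage_rpow_le_of_hasSplitting (d : ℕ) (hp : 1 < p) (hpq : p < q)
    (hK : K ≠ ∞) :
    ∃ ε C₁ : ℝ≥0∞, ε ≠ 0 ∧ ε ≠ ∞ ∧ C₁ ≠ ∞ ∧ ∀ (c : Ed d) (R : ℝ), 0 < R →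
      ∀ u F G : Ed d → ℝ≥0∞, AEMeasurable u (volume.restrict (cube c (4 * R))) →
      ∫⁻ x in cube c (4 * R), u x ≠ ∞ → AEMeasurable F (volume.restrict (cube c (4 * R))) →
      AEMeasurable G (volume.restrict (cube c (4 * R))) →
      (∀ x ∈ cube c R, ∀ k,
        HasSplitting volume (dyadicCubeAt c R k x 2) (dyadicCubeAt c R k x 4) u F G ε K q) →
      ⨍⁻ x in cube c R, u x ^ p ∂volume ≤
        C₁ * (⨍⁻ x in cube c (4 * R), F x ^ p ∂volume + ⨍⁻ x in cube c (4 * R), G x ^ p ∂volume +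
          (⨍⁻ x in cube c (4 * R), u x ∂volume) ^ p) := by
  have hp₀ : 0 ≤ p := by linarith
  obtain ⟨ε, N, δ, η, hε₀, hε, hpar, hη⟩ := exists_isGoodLambdaParam d hp₀ hpq hK
  have hNp : N ^ p ≠ ∞ := ENNReal.rpow_ne_top_of_nonneg hp₀ hpar.ne_top
  have hctl := controlConst_ne_top d hp hpar.weight_ne_zero
  refine ⟨ε, 2 * N ^ p * controlConst d p δ * 4 ^ d, hε₀, hε, by finiteness, ?_⟩
  intro c R hR u F G hu hu_fin hF hG hsplit
  set A := ⨍⁻ x in cube c (4 * R), u x ∂volume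
  rw [setLAverage_eq, ENNReal.div_le_iff (volume_cube_ne_zero c hR) (volume_cube_ne_top c R)]
  calc ∫⁻ x in cube c R, u x ^ p
      ≤ ∫⁻ x in cube c R, dyadicMaximal c R u x ^ p :=
        lintegral_mono_ae ((ae_le_dyadicMaximal hR hu hu_fin).mono fun x hx => by gcongr)
    _ ≤ 2 * N ^ p * controlConst d p δ * ((∫⁻ x in cube c (4 * R), F x ^ p) +
          (∫⁻ x in cube c (4 * R), G x ^ p) + A ^ p * volume (cube c R)) :=
        setLIntegral_dyadicMaximal_rpow_le_of_hasSplitting hp (by linarith) hR hpar hη hF hG hsplit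
    _ ≤ 2 * N ^ p * controlConst d p δ * ((∫⁻ x in cube c (4 * R), F x ^ p) +
          (∫⁻ x in cube c (4 * R), G x ^ p) + 4 ^ d * A ^ p * volume (cube c R)) := by
        gcongr
        exact le_mul_of_one_le_left' (one_le_pow₀ (by norm_num))
    _ = _ := by
        rw [setLIntegral_cube_four_mul_eq c R, setLIntegral_cube_four_mul_eq c R]
        ring

end MaximalEstimate

section Comparison

variable {α E E₁ E₂ : Type*} [MeasurableSpace α] [NormedAddCommGroup E] [NormedAddCommGroup E₁]
  [NormedAddCommGroup E₂] {μ : Measure α} {S S₂ S₄ : Set α} {r s t C ε : ℝ}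

lemma setAverage_norm_rpow_nonneg (h : α → E) (r : ℝ) : 0 ≤ ⨍ x in S, ‖h x‖ ^ r ∂μ :=
  integral_nonneg fun _ => by positivity

lemma ofReal_setAverage_norm_rpow {h : α → E} (hr : 0 < r)
    (hh : MemLp h (ENNReal.ofReal r) (μ.restrict S)) :
    ENNReal.ofReal (⨍ x in S, ‖h x‖ ^ r ∂μ) = ⨍⁻ x in S, ‖h x‖ₑ ^ r ∂μ := by
  have hint : IntegrableOn (fun x => ‖h x‖ ^ r) S μ := by
    simpa only [IntegrableOn, ENNReal.toReal_ofReal hr.le] using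
      hh.integrable_norm_rpow (ENNReal.ofReal_pos.2 hr).ne' ENNReal.ofReal_ne_top
  rw [ofReal_setAverage hint (.of_forall fun _ => by positivity), setLAverage_eq]
  simp only [← ENNReal.ofReal_rpow_of_nonneg (norm_nonneg _) hr.le, ofReal_norm]

lemma ofReal_setAverage_norm_rpow_rpow {h : α → E} {q : ℝ} (hr : 0 < r) (hq : 0 ≤ q)
    (hh : MemLp h (ENNReal.ofReal r) (μ.restrict S)) :
    ENNReal.ofReal ((⨍ x in S, ‖h x‖ ^ r ∂μ) ^ q) = (⨍⁻ x in S, ‖h x‖ₑ ^ r ∂μ) ^ q := by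
  rw [← ENNReal.ofReal_rpow_of_nonneg (setAverage_norm_rpow_nonneg h r) hq,
    ofReal_setAverage_norm_rpow hr hh]

lemma setLAverage_enorm_rpow_le_of_setAverage_le {h : α → E} {h₁ : α → E₁} {h₂ : α → E₂} {a b : ℝ}
    (hr : 0 < r) (hh : MemLp h (ENNReal.ofReal r) (μ.restrict S))
    (hh₁ : MemLp h₁ (ENNReal.ofReal r) (μ.restrict S))
    (hh₂ : MemLp h₂ (ENNReal.ofReal r) (μ.restrict S))
    (hle : ⨍ x in S, ‖h x‖ ^ r ∂μ ≤
      a * ⨍ x in S, ‖h₁ x‖ ^ r ∂μ + b * ⨍ x in S, ‖h₂ x‖ ^ r ∂μ) :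
    ⨍⁻ x in S, ‖h x‖ₑ ^ r ∂μ ≤ ENNReal.ofReal a * ⨍⁻ x in S, ‖h₁ x‖ₑ ^ r ∂μ +
      ENNReal.ofReal b * ⨍⁻ x in S, ‖h₂ x‖ₑ ^ r ∂μ := by
  simp only [← ofReal_setAverage_norm_rpow hr hh, ← ofReal_setAverage_norm_rpow hr hh₁,
    ← ofReal_setAverage_norm_rpow hr hh₂,
    ← ENNReal.ofReal_mul' (setAverage_norm_rpow_nonneg _ r)]
  exact (ENNReal.ofReal_le_ofReal hle).trans ENNReal.ofReal_add_le

lemma setLAverage_enorm_rpow_le_of_reverseHolder {h : α → E} {A : ℝ} (hr : 0 < r) (ht : 0 < t)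
    (hh₂ : MemLp h (ENNReal.ofReal t) (μ.restrict S₂))
    (hh₄ : MemLp h (ENNReal.ofReal r) (μ.restrict S₄))
    (hle : (⨍ x in S₂, ‖h x‖ ^ t ∂μ) ^ (1 / t) ≤ A * (⨍ x in S₄, ‖h x‖ ^ r ∂μ) ^ (1 / r)) :
    ⨍⁻ x in S₂, ‖h x‖ₑ ^ t ∂μ ≤
      (ENNReal.ofReal A ^ r * ⨍⁻ x in S₄, ‖h x‖ₑ ^ r ∂μ) ^ (t / r) := by
  have hroot : (⨍⁻ x in S₂, ‖h x‖ₑ ^ t ∂μ) ^ (1 / t) ≤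
      ENNReal.ofReal A * (⨍⁻ x in S₄, ‖h x‖ₑ ^ r ∂μ) ^ (1 / r) := by
    rw [← ofReal_setAverage_norm_rpow_rpow ht (by positivity) hh₂,
      ← ofReal_setAverage_norm_rpow_rpow hr (by positivity) hh₄,
      ← ENNReal.ofReal_mul' (Real.rpow_nonneg (setAverage_norm_rpow_nonneg h r) _)]
    exact ENNReal.ofReal_le_ofReal hle
  calc ⨍⁻ x in S₂, ‖h x‖ₑ ^ t ∂μ
      ≤ (ENNReal.ofReal A * (⨍⁻ x in S₄, ‖h x‖ₑ ^ r ∂μ) ^ (1 / r)) ^ t := by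
        rwa [← ENNReal.rpow_inv_le_iff ht, ← one_div]
    _ = (ENNReal.ofReal A ^ r * ⨍⁻ x in S₄, ‖h x‖ₑ ^ r ∂μ) ^ (t / r) := by
        rw [ENNReal.mul_rpow_of_nonneg _ _ ht.le, ENNReal.mul_rpow_of_nonneg _ _ (by positivity),
          ← ENNReal.rpow_mul, ← ENNReal.rpow_mul, mul_div_cancel₀ _ hr.ne', one_div_mul_eq_div]

lemma memLp_of_setLAverage_enorm_rpow_ne_top {h : α → E} (hs : 0 < s) (hS : μ S ≠ ∞)
    (hh : AEStronglyMeasurable h (μ.restrict S)) (hfin : ⨍⁻ x in S, ‖h x‖ₑ ^ s ∂μ ≠ ∞) :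
    MemLp h (ENNReal.ofReal s) (μ.restrict S) := by
  have hlint : ∫⁻ x in S, ‖h x‖ₑ ^ s ∂μ < ∞ := by
    rw [← measure_mul_setLAverage _ hS]
    exact (ENNReal.mul_ne_top hS hfin).lt_top
  refine ⟨hh, (eLpNorm_lt_top_iff_lintegral_rpow_enorm_lt_top (ENNReal.ofReal_pos.2 hs).ne'
    ENNReal.ofReal_ne_top).2 ?_⟩
  rwa [ENNReal.toReal_ofReal hs.le]

lemma setAverage_norm_rpow_root_le {w : α → E} {f : α → E₁} {g : α → E₂} {K : ℝ≥0∞}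
    (hr : 0 < r) (hs : 0 < s) (hK : K ≠ ∞) (hws : MemLp w (ENNReal.ofReal s) (μ.restrict S))
    (hf : MemLp f (ENNReal.ofReal s) (μ.restrict S₄))
    (hg : MemLp g (ENNReal.ofReal s) (μ.restrict S₄))
    (hw : MemLp w (ENNReal.ofReal r) (μ.restrict S₄))
    (hle : (⨍⁻ x in S, ‖w x‖ₑ ^ s ∂μ) ^ (1 / s) ≤
      K * ((⨍⁻ x in S₄, ‖f x‖ₑ ^ s ∂μ) ^ (1 / s) +
        (⨍⁻ x in S₄, ‖g x‖ₑ ^ s ∂μ) ^ (1 / s) +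
        (⨍⁻ x in S₄, ‖w x‖ₑ ^ r ∂μ) ^ (1 / r))) :
    (⨍ x in S, ‖w x‖ ^ s ∂μ) ^ (1 / s) ≤
      K.toReal * ((⨍ x in S₄, ‖f x‖ ^ s ∂μ) ^ (1 / s) + (⨍ x in S₄, ‖g x‖ ^ s ∂μ) ^ (1 / s) +
        (⨍ x in S₄, ‖w x‖ ^ r ∂μ) ^ (1 / r)) := by
  have hs' : 0 ≤ 1 / s := by positivity
  have hr' : 0 ≤ 1 / r := by positivity
  have hf₀ := Real.rpow_nonneg (setAverage_norm_rpow_nonneg (μ := μ) (S := S₄) f s) (1 / s)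
  have hg₀ := Real.rpow_nonneg (setAverage_norm_rpow_nonneg (μ := μ) (S := S₄) g s) (1 / s)
  have hw₀ := Real.rpow_nonneg (setAverage_norm_rpow_nonneg (μ := μ) (S := S₄) w r) (1 / r)
  rw [← ofReal_setAverage_norm_rpow_rpow hs hs' hws, ← ofReal_setAverage_norm_rpow_rpow hs hs' hf,
    ← ofReal_setAverage_norm_rpow_rpow hs hs' hg, ← ofReal_setAverage_norm_rpow_rpow hr hr' hw,
    ← ENNReal.ofReal_add hf₀ hg₀, ← ENNReal.ofReal_add (add_nonneg hf₀ hg₀) hw₀,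
    ENNReal.ofReal_le_iff_le_toReal (by finiteness), ENNReal.toReal_mul,
    ENNReal.toReal_ofReal (add_nonneg (add_nonneg hf₀ hg₀) hw₀)] at hle
  exact hle

/-- The existence of a comparison function `wa` for `w` on a pair of sets, which in the theorem are
`S₂ = 2Q̃ₖ` and `S₄ = 4Q̃ₖ`: `wa` satisfies a reverse Hölder inequality, is bounded in `L^r` by
`w` and `g`, and is `L^r`-close to `w` up to `f`. -/
def HasComparison (μ : Measure α) (S₂ S₄ : Set α) (w : α → E) (f : α → E₁) (g : α → E₂)
    (r t C ε : ℝ) : Prop :=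
  ∃ wa : α → E, MemLp wa (ENNReal.ofReal t) (μ.restrict S₂) ∧
    MemLp wa (ENNReal.ofReal r) (μ.restrict S₄) ∧
    (⨍ x in S₂, ‖wa x‖ ^ t ∂μ) ^ (1 / t) ≤ C / 2 * (⨍ x in S₄, ‖wa x‖ ^ r ∂μ) ^ (1 / r) ∧
    ⨍ x in S₄, ‖wa x‖ ^ r ∂μ ≤
      C * ⨍ x in S₄, ‖w x‖ ^ r ∂μ + C * ⨍ x in S₄, ‖g x‖ ^ r ∂μ ∧
    ⨍ x in S₄, ‖w x - wa x‖ ^ r ∂μ ≤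
      ε * ⨍ x in S₄, ‖w x‖ ^ r ∂μ + C * ⨍ x in S₄, ‖f x‖ ^ r ∂μ

/-- The constant `K` of the `HasSplitting` obtained from a `HasComparison` with constant `C`. -/
def splittingConst (r C : ℝ) : ℝ≥0∞ :=
  2 ^ r * (ENNReal.ofReal C * (1 + ENNReal.ofReal (C / 2) ^ r))

lemma splittingConst_ne_top (hr : 0 ≤ r) : splittingConst r C ≠ ∞ := by
  have h2 : (2 : ℝ≥0∞) ^ r ≠ ∞ := ENNReal.rpow_ne_top_of_nonneg hr (by simp)
  have hC : ENNReal.ofReal (C / 2) ^ r ≠ ∞ := ENNReal.rpow_ne_top_of_nonneg hr (by simp)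
  unfold splittingConst
  finiteness

variable {w : α → E} {f : α → E₁} {g : α → E₂}

lemma HasComparison.hasSplitting (hr : 0 < r) (ht : 0 < t) (hS : S₂ ⊆ S₄)
    (hw : MemLp w (ENNReal.ofReal r) (μ.restrict S₄))
    (hf : MemLp f (ENNReal.ofReal r) (μ.restrict S₄))
    (hg : MemLp g (ENNReal.ofReal r) (μ.restrict S₄))
    (hcomp : HasComparison μ S₂ S₄ w f g r t C ε) :
    HasSplitting μ S₂ S₄ (fun x => ‖w x‖ₑ ^ r) (fun x => ‖f x‖ₑ ^ r) (fun x => ‖g x‖ₑ ^ r)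
      (2 ^ r * ENNReal.ofReal ε) (splittingConst r C) (t / r) := by
  obtain ⟨wa, hwa₂, hwa₄, hholder, hbound, hclose⟩ := hcomp
  have h2 : (2 : ℝ≥0∞) ^ r ≠ ∞ := ENNReal.rpow_ne_top_of_nonneg hr.le (by simp)
  have hq : 0 ≤ t / r := by positivity
  have hw₂ := hw.1.mono_measure (Measure.restrict_mono_set μ hS)
  have hclose' := setLAverage_enorm_rpow_le_of_setAverage_le hr (hw.sub hwa₄) hw hf hclose
  have hbound' := setLAverage_enorm_rpow_le_of_setAverage_le hr hwa₄ hw hg hbound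
  have hholder' := setLAverage_enorm_rpow_le_of_reverseHolder hr ht hwa₂ hwa₄ hholder
  refine ⟨fun x => 2 ^ r * ‖w x - wa x‖ₑ ^ r, fun x => 2 ^ r * ‖wa x‖ₑ ^ r,
    ((hw₂.sub hwa₂.1).enorm.pow_const r).const_mul _, (hwa₂.1.enorm.pow_const r).const_mul _,
    fun x _ => ?_, ?_, ?_⟩
  · calc ‖w x‖ₑ ^ r = ‖(w x - wa x) + wa x‖ₑ ^ r := by rw [sub_add_cancel]
      _ ≤ (‖w x - wa x‖ₑ + ‖wa x‖ₑ) ^ r := by gcongr; exact enorm_add_le _ _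
      _ ≤ 2 ^ r * ‖w x - wa x‖ₑ ^ r + 2 ^ r * ‖wa x‖ₑ ^ r :=
          (add_rpow_le_mul _ _ hr.le).trans_eq (mul_add _ _ _)
  · rw [setLAverage_const_mul h2, splittingConst, mul_assoc, mul_assoc, ← mul_add]
    refine mul_le_mul_right (hclose'.trans (add_le_add_right (mul_le_mul_left ?_ _) _)) _
    exact le_mul_of_one_le_right' le_self_add
  · simp only [ENNReal.mul_rpow_of_nonneg (2 ^ r) _ hq, ← ENNReal.rpow_mul ‖_‖ₑ,
      mul_div_cancel₀ t hr.ne', splittingConst, mul_assoc]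
    rw [setLAverage_const_mul (ENNReal.rpow_ne_top_of_nonneg hq h2)]
    refine mul_le_mul_right (hholder'.trans (ENNReal.rpow_le_rpow ?_ hq)) _
    calc ENNReal.ofReal (C / 2) ^ r * ⨍⁻ x in S₄, ‖wa x‖ₑ ^ r ∂μ
        ≤ (1 + ENNReal.ofReal (C / 2) ^ r) * (ENNReal.ofReal C *
            (⨍⁻ x in S₄, ‖w x‖ₑ ^ r ∂μ + ⨍⁻ x in S₄, ‖g x‖ₑ ^ r ∂μ)) := by
          rw [mul_add (ENNReal.ofReal C)]
          exact mul_le_mul' le_add_self hbound'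
      _ = _ := mul_left_comm _ _ _

lemma HasComparison.mono_error {ε' : ℝ} (hε : ε ≤ ε')
    (hcomp : HasComparison μ S₂ S₄ w f g r t C ε) : HasComparison μ S₂ S₄ w f g r t C ε' := by
  obtain ⟨wa, hwa₂, hwa₄, hholder, hbound, hclose⟩ := hcomp
  exact ⟨wa, hwa₂, hwa₄, hholder, hbound, hclose.trans (add_le_add_left
    (mul_le_mul_of_nonneg_right hε (setAverage_norm_rpow_nonneg w r)) _)⟩

end Comparison

section Reduction

variable {d : ℕ} {E E₁ E₂ : Type*} [NormedAddCommGroup E] [NormedAddCommGroup E₁]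
  [NormedAddCommGroup E₂] {c : Ed d} {R r s t C ε : ℝ} {w : Ed d → E} {f : Ed d → E₁}
  {g : Ed d → E₂}

lemma hasSplitting_dyadicCubeAt_of_hasComparison (hR : 0 < R) (hr : 0 < r) (ht : 0 < t)
    (hw : MemLp w (ENNReal.ofReal r) (volume.restrict (cube c (4 * R))))
    (hf : MemLp f (ENNReal.ofReal r) (volume.restrict (cube c (4 * R))))
    (hg : MemLp g (ENNReal.ofReal r) (volume.restrict (cube c (4 * R))))
    (hcomp : ∀ (k : ℕ) (m : Fin d → ℕ), (∀ i, m i < 2 ^ k) →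
      HasComparison volume (dyadicCube c R k m 2) (dyadicCube c R k m 4) w f g r t C ε)
    {x : Ed d} (hx : x ∈ cube c R) (k : ℕ) :
    HasSplitting volume (dyadicCubeAt c R k x 2) (dyadicCubeAt c R k x 4)
      (fun y => ‖w y‖ₑ ^ r) (fun y => ‖f y‖ₑ ^ r) (fun y => ‖g y‖ₑ ^ r)
      (2 ^ r * ENNReal.ofReal ε) (splittingConst r C) (t / r) := by
  have hle := Measure.restrict_mono_set volume
    (dyadicCubeAt_subset_cube hR (a := 4) (by norm_num) k hx)
  exact (hcomp k _ (dyadicIndex_lt hR k hx)).hasSplitting hr ht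
    (dyadicCube_subset_of_le hR.le (by norm_num)) (hw.mono_measure hle) (hf.mono_measure hle)
    (hg.mono_measure hle)

lemma exists_setLAverage_enorm_rpow_le_of_hasComparison (d : ℕ) (E E₁ E₂ : Type*)
    [NormedAddCommGroup E] [NormedAddCommGroup E₁] [NormedAddCommGroup E₂] (C : ℝ) (hr : 0 < r)
    (hrs : r < s) (hst : s < t) :
    ∃ ε₀ : ℝ, 0 < ε₀ ∧ ∃ C₁ : ℝ≥0∞, C₁ ≠ ∞ ∧ ∀ (c : Ed d) (R : ℝ), 0 < R →
      ∀ (f : Ed d → E₁) (g : Ed d → E₂) (w : Ed d → E),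
      MemLp f (ENNReal.ofReal r) (volume.restrict (cube c (4 * R))) →
      MemLp g (ENNReal.ofReal r) (volume.restrict (cube c (4 * R))) →
      MemLp w (ENNReal.ofReal r) (volume.restrict (cube c (4 * R))) →
      (∀ (k : ℕ) (m : Fin d → ℕ), (∀ i, m i < 2 ^ k) →
        HasComparison volume (dyadicCube c R k m 2) (dyadicCube c R k m 4) w f g r t C ε₀) →
      ⨍⁻ x in cube c R, ‖w x‖ₑ ^ s ∂volume ≤
        C₁ * (⨍⁻ x in cube c (4 * R), ‖f x‖ₑ ^ s ∂volume +
          ⨍⁻ x in cube c (4 * R), ‖g x‖ₑ ^ s ∂volume +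
          (⨍⁻ x in cube c (4 * R), ‖w x‖ₑ ^ r ∂volume) ^ (s / r)) := by
  have h2₀ : (2 : ℝ≥0∞) ^ r ≠ 0 := (ENNReal.rpow_pos two_pos (by simp)).ne'
  have h2 : (2 : ℝ≥0∞) ^ r ≠ ∞ := ENNReal.rpow_ne_top_of_nonneg hr.le (by simp)
  obtain ⟨ε, C₁, hε₀, hε, hC₁, hmain⟩ := exists_setLAverage_rpow_le_of_hasSplitting d
    ((one_lt_div hr).2 hrs) (div_lt_div_of_pos_right hst hr) (splittingConst_ne_top (C := C) hr.le)
  have hε_div : ε / 2 ^ r ≠ ∞ := ENNReal.div_ne_top hε h2₀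
  refine ⟨(ε / 2 ^ r).toReal, ENNReal.toReal_pos (ENNReal.div_ne_zero.2 ⟨hε₀, h2⟩) hε_div, C₁, hC₁,
    fun c R hR f g w hf hg hw hcomp => ?_⟩
  have hfin : ∫⁻ x in cube c (4 * R), ‖w x‖ₑ ^ r ≠ ∞ := by
    simpa only [ENNReal.toReal_ofReal hr.le] using (lintegral_rpow_enorm_lt_top_of_eLpNorm_lt_top
      (ENNReal.ofReal_pos.2 hr).ne' ENNReal.ofReal_ne_top hw.2).ne
  have hsplit := fun x hx k =>
    hasSplitting_dyadicCubeAt_of_hasComparison (x := x) hR hr (by linarith) hw hf hg hcomp hx k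
  rw [ENNReal.ofReal_toReal hε_div, ENNReal.mul_div_cancel h2₀ h2] at hsplit
  have hle := hmain c R hR _ _ _ (hw.1.enorm.pow_const r) hfin (hf.1.enorm.pow_const r)
    (hg.1.enorm.pow_const r) hsplit
  simpa only [← ENNReal.rpow_mul ‖_‖ₑ, mul_div_cancel₀ s hr.ne'] using hle

end Reduction

theorem stmt1_general (d : ℕ) (E E₁ E₂ : Type*) [NormedAddCommGroup E] [NormedAddCommGroup E₁]
    [NormedAddCommGroup E₂] (r s t C : ℝ) (hr : 0 < r) (hrs : r < s) (hst : s < t) :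
    ∃ ε₀ : ℝ, 0 < ε₀ ∧ ∃ c : ℝ, 0 < c ∧
      ∀ (cQ : Ed d) (R : ℝ), 0 < R →
      ∀ (f : Ed d → E₁) (g : Ed d → E₂) (w : Ed d → E),
        MemLp f (ENNReal.ofReal s) (volume.restrict (cube cQ (4 * R))) →
        MemLp g (ENNReal.ofReal s) (volume.restrict (cube cQ (4 * R))) →
        MemLp w (ENNReal.ofReal r) (volume.restrict (cube cQ (4 * R))) →
        ∀ ε ≤ ε₀,
        (∀ (k : ℕ) (m : Fin d → ℕ), (∀ i, m i < 2 ^ k) →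
          HasComparison volume (dyadicCube cQ R k m 2) (dyadicCube cQ R k m 4) w f g r t C ε) →
        MemLp w (ENNReal.ofReal s) (volume.restrict (cube cQ R)) ∧
        (⨍ x in cube cQ R, ‖w x‖ ^ s) ^ (1 / s) ≤
          c * ((⨍ x in cube cQ (4 * R), ‖f x‖ ^ s) ^ (1 / s) +
            (⨍ x in cube cQ (4 * R), ‖g x‖ ^ s) ^ (1 / s) +
            (⨍ x in cube cQ (4 * R), ‖w x‖ ^ r) ^ (1 / r)) := by
  have hs : 0 < s := hr.trans hrs
  obtain ⟨ε₀, hε₀, C₁, hC₁, hmain⟩ :=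
    exists_setLAverage_enorm_rpow_le_of_hasComparison d E E₁ E₂ C hr hrs hst
  have hconst : (4 * C₁) ^ (1 / s) + 1 ≠ ∞ := ENNReal.add_ne_top.2
    ⟨ENNReal.rpow_ne_top_of_nonneg (by positivity) (by finiteness), ENNReal.one_ne_top⟩
  refine ⟨ε₀, hε₀, ((4 * C₁) ^ (1 / s) + 1).toReal, ENNReal.toReal_pos (by simp) hconst, ?_⟩
  intro cQ R hR f g w hf hg hw ε hε hcomp
  have : IsFiniteMeasure (volume.restrict (cube cQ (4 * R))) :=
    isFiniteMeasure_restrict.2 (volume_cube_ne_top cQ (4 * R))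
  have hle := hmain cQ R hR f g w (hf.mono_exponent (ENNReal.ofReal_le_ofReal hrs.le))
    (hg.mono_exponent (ENNReal.ofReal_le_ofReal hrs.le)) hw
    fun k m hm => (hcomp k m hm).mono_error hε
  have hws : MemLp w (ENNReal.ofReal s) (volume.restrict (cube cQ R)) := by
    refine memLp_of_setLAverage_enorm_rpow_ne_top hs (volume_cube_ne_top cQ R)
      (hw.1.mono_measure (Measure.restrict_mono_set volume (cube_subset_cube fun i => ?_)))
      (ne_top_of_le_ne_top ?_ hle)
    · rw [sub_self, abs_zero]
      linarith
    · rw [← ofReal_setAverage_norm_rpow hs hf, ← ofReal_setAverage_norm_rpow hs hg,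
        ← ofReal_setAverage_norm_rpow_rpow hr (by positivity) hw]
      finiteness
  exact ⟨hws, setAverage_norm_rpow_root_le hr hs hconst hws hf hg hw
    ((rpow_le_of_le_mul_add_add hr hs hle).trans (mul_le_mul_left le_self_add _))⟩

/-- The Calderón–Zygmund type comparison lemma: if on (the predecessor `Q̃_k`
of) every proper dyadic subcube `Q_k` of `Q` there is a comparison function `w_a` satisfying a
reverse Hölder estimate, an `L^r` bound, and an `L^r` closeness estimate to `w` with a small
parameter `ε < ε₀`, then `w ∈ L^s(Q)` together with the corresponding estimate.  Here a dyadic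
subcube of generation `k+1` has index `m` with `m i < 2^{k+1}` and its predecessor is the
generation-`k` cube with index `⌊m/2⌋`.  The constants `ε₀` and `c` depend only on
`d, n, r, s, t, C`. -/
theorem stmt1 (d n : ℕ) (r s t C : ℝ) (hr : 1 ≤ r) (hrs : r < s) (hst : s < t)
    (hC : 0 < C) :
    ∃ ε₀ : ℝ, 0 < ε₀ ∧ ∃ c : ℝ, 0 < c ∧
      ∀ (cQ : Ed d) (R : ℝ), 0 < R →
      ∀ (f g : Ed d → ℝ) (w : Ed d → En n),
        MemLp f (ENNReal.ofReal s) (volume.restrict (cube cQ (4 * R))) →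
        MemLp g (ENNReal.ofReal s) (volume.restrict (cube cQ (4 * R))) →
        MemLp w (ENNReal.ofReal r) (volume.restrict (cube cQ (4 * R))) →
        ∀ ε : ℝ, 0 < ε → ε < ε₀ →
        (∀ (k : ℕ) (m : Fin d → ℕ), (∀ i, m i < 2 ^ (k + 1)) →
          ∃ wa : Ed d → En n,
            MemLp wa (ENNReal.ofReal t)
              (volume.restrict (dyadicCube cQ R k (fun i => m i / 2) 2)) ∧
            MemLp wa (ENNReal.ofReal r)
              (volume.restrict (dyadicCube cQ R k (fun i => m i / 2) 4)) ∧
            (⨍ x in dyadicCube cQ R k (fun i => m i / 2) 2, ‖wa x‖ ^ t) ^ (1 / t) ≤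
              C / 2 * (⨍ x in dyadicCube cQ R k (fun i => m i / 2) 4, ‖wa x‖ ^ r) ^ (1 / r) ∧
            (⨍ x in dyadicCube cQ R k (fun i => m i / 2) 4, ‖wa x‖ ^ r) ≤
              C * (⨍ x in dyadicCube cQ R k (fun i => m i / 2) 4, ‖w x‖ ^ r) +
              C * (⨍ x in dyadicCube cQ R k (fun i => m i / 2) 4, |g x| ^ r) ∧
            (⨍ x in dyadicCube cQ R k (fun i => m i / 2) 4, ‖w x - wa x‖ ^ r) ≤
              ε * (⨍ x in dyadicCube cQ R k (fun i => m i / 2) 4, ‖w x‖ ^ r) +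
              C * (⨍ x in dyadicCube cQ R k (fun i => m i / 2) 4, |f x| ^ r)) →
        MemLp w (ENNReal.ofReal s) (volume.restrict (cube cQ R)) ∧
        (⨍ x in cube cQ R, ‖w x‖ ^ s) ^ (1 / s) ≤
          c * ((⨍ x in cube cQ (4 * R), |f x| ^ s) ^ (1 / s) +
            (⨍ x in cube cQ (4 * R), |g x| ^ s) ^ (1 / s) +
            (⨍ x in cube cQ (4 * R), ‖w x‖ ^ r) ^ (1 / r)) := by
  obtain ⟨ε₀, hε₀, c, hc, hmain⟩ :=
    stmt1_general d (En n) ℝ ℝ r s t C (by linarith) hrs hst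
  refine ⟨ε₀, hε₀, c, hc, fun cQ R hR f g w hf hg hw ε _ hε hcomp =>
    hmain cQ R hR f g w hf hg hw ε hε.le fun k m hm => ?_⟩
  simpa only [HasComparison, Real.norm_eq_abs, mul_div_cancel_left₀ _ two_ne_zero] using
    hcomp k (fun i => 2 * m i) fun i => by have := hm i; rw [pow_succ]; lia
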